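/- arXiv:1706.08030 — 8 statements merged into one kernel-verified Lean document; each statement's English description precedes it below -/
import Mathlib

section
/- Let A ∈ ℝ^{m×N} with m ≤ N and let s be a natural number with 2s ≤ N. Then the following are equivalent: (i) for every x ∈ ℝ^N with ‖x‖₀ ≤ s, x is the unique vector z ∈ ℝ^N satisfying ‖z‖₀ ≤ s and Az = Ax; (ii) every v ∈ ℝ^N with Av = 0 and ‖v‖₀ ≤ 2s is the zero vector (equivalently, for every T ⊆ {1,…,N} with |T| = 2s the submatrix A_T has full column rank, i.e., A_T is injective). -/
/-! The `2s`-sparse vectors are exactly the differences of two `s`-sparse vectors: to write a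
`2s`-sparse `v` in this way, split its support into two sets of at most `s` indices each.
An additive map is injective on a set `S` if and only if its kernel meets `S - S` only in `0`;
apply this to the set of `s`-sparse vectors. -/

open Matrix Finset

/-- `‖x‖₀`: the number of nonzero entries of `x`. -/
noncomputable def l0 {N : ℕ} (x : Fin N → ℝ) : ℕ := (Finset.univ.filter fun i => x i ≠ 0).card

section SparseDifferences

open scoped Pointwise

theorem injOn_iff_forall_mem_sub_eq_zero {F G H : Type*} [AddGroup G] [AddGroup H]
    [FunLike F G H] [AddMonoidHomClass F G H] (f : F) (S : Set G) :
    Set.InjOn f S ↔ ∀ v ∈ S - S, f v = 0 → v = 0 := by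
  constructor
  · rintro hinj _ ⟨x, hx, z, hz, rfl⟩ hf
    rw [map_sub, sub_eq_zero] at hf
    exact sub_eq_zero.mpr (hinj hx hz hf)
  · intro hker x hx z hz hf
    refine sub_eq_zero.mp (hker (x - z) (Set.sub_mem_sub hx hz) ?_)
    rw [map_sub, hf, sub_self]

variable {ι : Type*} {β : ι → Type*} [Fintype ι] [∀ i, DecidableEq (β i)]

theorem hammingNorm_le_card [∀ i, Zero (β i)] {x : ∀ i, β i} {U : Finset ι}
    (hx : ∀ i ∉ U, x i = 0) : hammingNorm x ≤ #U :=
  card_le_card fun i hi => by_contra fun hiU => (mem_filter.mp hi).2 (hx i hiU)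

variable [∀ i, AddGroup (β i)]

theorem hammingNorm_sub_le (x z : ∀ i, β i) :
    hammingNorm (x - z) ≤ hammingNorm x + hammingNorm z :=
  calc
    hammingNorm (x - z) = hammingDist x z := by
      simp only [hammingNorm, hammingDist, Pi.sub_apply, sub_ne_zero]
    _ ≤ hammingDist x 0 + hammingDist 0 z := hammingDist_triangle x 0 z
    _ = hammingNorm x + hammingNorm z := by rw [hammingDist_zero_right, hammingDist_zero_left]

theorem exists_sub_eq_of_hammingNorm_le_add {a b : ℕ} {v : ∀ i, β i}
    (hv : hammingNorm v ≤ a + b) :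
    ∃ x z, hammingNorm x ≤ a ∧ hammingNorm z ≤ b ∧ x - z = v := by
  classical
  let support : Finset ι := {i | v i ≠ 0}
  obtain ⟨U, hU, hUcard⟩ : ∃ U ⊆ support, #U = min a #support :=
    exists_subset_card_eq (min_le_right _ _)
  refine ⟨U.piecewise v 0, U.piecewise 0 (-v), ?_, ?_, ?_⟩
  · exact (hammingNorm_le_card fun i hi => piecewise_eq_of_notMem U v 0 hi).trans
      (hUcard.trans_le (min_le_left _ _))
  · have hzero : ∀ i ∉ support \ U, U.piecewise (0 : ∀ i, β i) (-v) i = 0 := by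
      intro i hi
      by_cases hiU : i ∈ U
      · simp [hiU]
      · simpa [hiU, support] using hi
    have hcard : #(support \ U) ≤ b := by
      have hv' : #support ≤ a + b := hv
      rw [card_sdiff_of_subset hU, hUcard]
      omega
    exact (hammingNorm_le_card hzero).trans hcard
  · ext i
    by_cases hiU : i ∈ U <;> simp [hiU]

theorem setOf_hammingNorm_le_sub_setOf_hammingNorm_le (a b : ℕ) :
    {x : ∀ i, β i | hammingNorm x ≤ a} - {z : ∀ i, β i | hammingNorm z ≤ b} =
      {v | hammingNorm v ≤ a + b} := by
  ext v
  constructor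
  · rintro ⟨x, hx, z, hz, rfl⟩
    exact (hammingNorm_sub_le x z).trans (add_le_add hx hz)
  · intro hv
    obtain ⟨x, z, hx, hz, hxz⟩ := exists_sub_eq_of_hammingNorm_le_add hv
    exact ⟨x, hx, z, hz, hxz⟩

theorem stmt0_general {F H : Type*} [AddGroup H] [FunLike F (∀ i, β i) H]
    [AddMonoidHomClass F (∀ i, β i) H] (f : F) (s : ℕ) :
    (∀ x : ∀ i, β i, hammingNorm x ≤ s →
      ∀ z : ∀ i, β i, hammingNorm z ≤ s → f z = f x → z = x) ↔
    (∀ v : ∀ i, β i, f v = 0 → hammingNorm v ≤ 2 * s → v = 0) :=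
  calc
    _ ↔ Set.InjOn f {x | hammingNorm x ≤ s} :=
      ⟨fun h z hz x hx => h x hx z hz, fun h x hx z hz => h hz hx⟩
    _ ↔ ∀ v ∈ {v : ∀ i, β i | hammingNorm v ≤ 2 * s}, f v = 0 → v = 0 := by
      rw [injOn_iff_forall_mem_sub_eq_zero, setOf_hammingNorm_le_sub_setOf_hammingNorm_le, two_mul]
    _ ↔ _ := forall_congr' fun _ => imp.swap

end SparseDifferences

theorem l0_eq_hammingNorm {N : ℕ} (x : Fin N → ℝ) : l0 x = hammingNorm x := rfl

/-- Uniqueness of `s`-sparse recovery for all `s`-sparse vectors is equivalent to the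
absence of nonzero `2s`-sparse vectors in the kernel of `A`. -/
theorem stmt0 (m N s : ℕ) (hmN : m ≤ N) (hsN : 2 * s ≤ N)
    (A : Matrix (Fin m) (Fin N) ℝ) :
    (∀ x : Fin N → ℝ, l0 x ≤ s →
      ∀ z : Fin N → ℝ, l0 z ≤ s → A.mulVec z = A.mulVec x → z = x) ↔
    (∀ v : Fin N → ℝ, A.mulVec v = 0 → l0 v ≤ 2 * s → v = 0) := by
  simpa only [l0_eq_hammingNorm, mulVecLin_apply] using stmt0_general A.mulVecLin s
end

section
/- Let A ∈ ℝ^{m×N} satisfy: for every index set T ⊆ {1,…,N} with |T| ≤ m, the submatrix A_T is injective. Let s, m satisfy s < m < 2s. Fix index sets S', S'' ⊆ {1,…,N} with |S'| ≤ s and |S''| ≤ s, and define Φ(S',S'') = { x' ∈ ℝ^N : supp(x') = S' and there exists x'' ≠ x' with supp(x'') = S'' and A(x' − x'') = 0 }. Then Φ(S',S'') is contained in a linear subspace of ℝ^N of dimension at most |S'| + |S''| − m ≤ 2s − m < s. -/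
open Matrix Finset

/-- The support of a vector, as a `Finset`. -/
noncomputable def suppF {N : ℕ} (x : Fin N → ℝ) : Finset (Fin N) :=
  Finset.univ.filter fun i => x i ≠ 0

/-- `A_T` has full column rank: the only vector supported in `T` mapped to zero by `A`
is the zero vector. -/
def colsInj {m N : ℕ} (A : Matrix (Fin m) (Fin N) ℝ) (T : Finset (Fin N)) : Prop :=
  ∀ v : Fin N → ℝ, (∀ i, i ∉ T → v i = 0) → A.mulVec v = 0 → v = 0

/-!
Write `V S` for the space of vectors supported in `S`. If `x ∈ V S'` and `y ∈ V S''` have the same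
image under `A`, then `x = y + (x - y)` lies in `W = V S' ⊓ (V S'' ⊔ ker A)`.

If `|S' ∪ S''| ≤ m`, then `ker A` meets `V (S' ∪ S'')` trivially, so `x = y` and `Φ(S', S'')` is
empty. Otherwise pick `T ⊆ S' ∪ S''` with `|T| = m`. Since `ker A` also meets `V T` trivially, its
part `L` inside `V S' ⊔ V S''` satisfies `dim L + m ≤ dim (V S' ⊔ V S'')`, and the dimension formula
for `V S'` and `V S'' ⊔ L` gives `dim W ≤ |S'| + |S''| - m`.
-/

open Module LinearMap

theorem inf_sup_inf_sup_eq {α : Type*} [Lattice α] [IsModularLattice α] (p q n : α) :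
    p ⊓ (q ⊔ n ⊓ (p ⊔ q)) = p ⊓ (q ⊔ n) := by
  rw [← sup_inf_assoc_of_le n le_sup_right, inf_left_comm, inf_sup_self, inf_comm]

section Finrank

variable {K V : Type*} [DivisionRing K] [AddCommGroup V] [Module K V]

theorem finrank_add_finrank_le_of_disjoint_of_le {P Q R : Submodule K V} [FiniteDimensional K R]
    (hP : P ≤ R) (hQ : Q ≤ R) (hPQ : Disjoint P Q) : finrank K P + finrank K Q ≤ finrank K R := by
  have := Submodule.finiteDimensional_of_le hP
  have := Submodule.finiteDimensional_of_le hQ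
  calc finrank K P + finrank K Q
    _ = finrank K ↥(P ⊔ Q) := by
      rw [← Submodule.finrank_sup_add_finrank_inf_eq, hPQ.eq_bot, finrank_bot, add_zero]
    _ ≤ finrank K R := Submodule.finrank_mono (sup_le hP hQ)

theorem finrank_inf_sup_add_finrank_le {P Q N T : Submodule K V} [FiniteDimensional K P]
    [FiniteDimensional K Q] (hT : T ≤ P ⊔ Q) (hNT : Disjoint N T) :
    finrank K ↥(P ⊓ (Q ⊔ N)) + finrank K T ≤ finrank K P + finrank K Q := by
  rw [← inf_sup_inf_sup_eq]
  set L := N ⊓ (P ⊔ Q)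
  have hL : finrank K L + finrank K T ≤ finrank K ↥(P ⊔ Q) :=
    finrank_add_finrank_le_of_disjoint_of_le inf_le_right hT (hNT.mono_left inf_le_left)
  have : FiniteDimensional K L := Submodule.finiteDimensional_of_le inf_le_right
  have hsup : finrank K ↥(P ⊔ Q) ≤ finrank K ↥(P ⊔ (Q ⊔ L)) :=
    Submodule.finrank_mono (sup_le_sup_left le_sup_left P)
  have hdim := Submodule.finrank_sup_add_finrank_inf_eq P (Q ⊔ L)
  have hQL := Submodule.finrank_add_le_finrank_add_finrank Q L
  lia

end Finrank

section CoordSubspace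

variable {ι K : Type*} [Semiring K]

variable (K) in
/-- The coordinate subspace of the vectors in `ι → K` supported in `S`, cut out by the coordinates
outside `S`. -/
def coordSubspace (S : Set ι) : Submodule K (ι → K) :=
  ⨅ i ∈ Sᶜ, ker (proj i)

theorem mem_coordSubspace {S : Set ι} {x : ι → K} :
    x ∈ coordSubspace K S ↔ ∀ i ∉ S, x i = 0 := by
  simp [coordSubspace]

theorem coordSubspace_mono {S T : Set ι} (h : S ⊆ T) : coordSubspace K S ≤ coordSubspace K T :=
  biInf_mono fun _ hi hiS => hi (h hiS)

theorem coordSubspace_union (S T : Set ι) :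
    coordSubspace K (S ∪ T) = coordSubspace K S ⊔ coordSubspace K T := by
  refine le_antisymm (fun x hx => ?_) (sup_le (coordSubspace_mono Set.subset_union_left)
    (coordSubspace_mono Set.subset_union_right))
  rw [← Set.indicator_self_add_compl S x]
  refine Submodule.add_mem_sup (mem_coordSubspace.2 fun i hi => Set.indicator_of_notMem hi x)
    (mem_coordSubspace.2 fun i hi => ?_)
  by_cases hiS : i ∈ S
  · exact Set.indicator_of_notMem (not_not_intro hiS) x
  · rw [Set.indicator_of_mem hiS]
    exact mem_coordSubspace.1 hx i (not_or_intro hiS hi)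

variable (K) in
open Classical in
/-- Restriction to `S` identifies the vectors supported in `S` with the functions on `S`. -/
noncomputable def coordSubspaceEquiv (S : Set ι) : coordSubspace K S ≃ₗ[K] (S → K) :=
  iInfKerProjEquiv K (fun _ => K) disjoint_compl_right (Set.union_compl_self S).ge

instance finite_coordSubspace (S : Finset ι) : Module.Finite K (coordSubspace K (S : Set ι)) :=
  Module.Finite.equiv (coordSubspaceEquiv K (S : Set ι)).symm

theorem finrank_coordSubspace [StrongRankCondition K] (S : Finset ι) :
    finrank K (coordSubspace K (S : Set ι)) = #S := by
  simp [(coordSubspaceEquiv K (S : Set ι)).finrank_eq]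

end CoordSubspace

theorem mem_coordSubspace_suppF {N : ℕ} (x : Fin N → ℝ) : x ∈ coordSubspace ℝ (suppF x) := by
  simp [mem_coordSubspace, suppF]

theorem colsInj.disjoint_ker {m N : ℕ} {A : Matrix (Fin m) (Fin N) ℝ} {T : Finset (Fin N)}
    (h : colsInj A T) : Disjoint (ker A.mulVecLin) (coordSubspace ℝ T) :=
  Submodule.disjoint_def.2 fun v hv hvT => h v (mem_coordSubspace.1 hvT) hv

theorem stmt3_general {ι K M : Type*} [DivisionRing K] [AddCommGroup M] [Module K M]
    (f : (ι → K) →ₗ[K] M) (m : ℕ)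
    (hf : ∀ T : Finset ι, #T ≤ m → Disjoint (ker f) (coordSubspace K T)) (S' S'' : Finset ι) :
    ∃ W : Submodule K (ι → K),
      {x : ι → K | x ∈ coordSubspace K S' ∧
          ∃ y : ι → K, y ≠ x ∧ y ∈ coordSubspace K S'' ∧ f (x - y) = 0} ⊆
        (W : Set (ι → K)) ∧
      FiniteDimensional K W ∧ finrank K W ≤ #S' + #S'' - m := by
  classical
  have hU : coordSubspace K (S' ∪ S'' : Finset ι) =
      coordSubspace K (S' : Set ι) ⊔ coordSubspace K (S'' : Set ι) := by
    rw [coe_union, coordSubspace_union]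
  rcases le_total #(S' ∪ S'') m with hm | hm
  · refine ⟨⊥, ?_, inferInstance, by simp⟩
    rintro x ⟨hx, y, hne, hy, hxy⟩
    have hmem : x - y ∈ coordSubspace K (S' ∪ S'' : Finset ι) := hU ▸ Submodule.sub_mem_sup hx hy
    exact absurd (sub_eq_zero.1 (Submodule.disjoint_def.1 (hf _ hm) _ hxy hmem)).symm hne
  · obtain ⟨T, hTU, hT⟩ := exists_subset_card_eq hm
    refine ⟨coordSubspace K (S' : Set ι) ⊓ (coordSubspace K (S'' : Set ι) ⊔ ker f), ?_,
      inferInstance, ?_⟩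
    · rintro x ⟨hx, y, -, hy, hxy⟩
      exact ⟨hx, add_sub_cancel y x ▸ Submodule.add_mem_sup hy hxy⟩
    · have hdim := finrank_inf_sup_add_finrank_le
        ((coordSubspace_mono (coe_subset.2 hTU)).trans hU.le) (hf T hT.le)
      simp only [finrank_coordSubspace, hT] at hdim
      exact Nat.le_sub_of_add_le hdim

/-- For `s < m < 2s`, the set `Φ(S', S'')` of vectors with support `S'` for which there
is a different vector with support `S''` and the same image under `A` is contained in a
linear subspace of dimension at most `|S'| + |S''| - m ≤ 2s - m < s`. -/
theorem stmt3 (m N s : ℕ) (A : Matrix (Fin m) (Fin N) ℝ)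
    (hinj : ∀ T : Finset (Fin N), T.card ≤ m → colsInj A T)
    (hsm : s < m) (hms : m < 2 * s)
    (S' S'' : Finset (Fin N)) (hS' : S'.card ≤ s) (hS'' : S''.card ≤ s) :
    ∃ W : Submodule ℝ (Fin N → ℝ),
      ({x' : Fin N → ℝ | suppF x' = S' ∧
          ∃ x'' : Fin N → ℝ, x'' ≠ x' ∧ suppF x'' = S'' ∧ A.mulVec (x' - x'') = 0}
        ⊆ (W : Set (Fin N → ℝ))) ∧
      Module.finrank ℝ W ≤ S'.card + S''.card - m ∧
      S'.card + S''.card - m ≤ 2 * s - m ∧ 2 * s - m < s := by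
  obtain ⟨W, hΦ, -, hW⟩ := stmt3_general A.mulVecLin m (fun T hT => (hinj T hT).disjoint_ker) S' S''
  exact ⟨W, fun x ⟨hx, y, hne, hy, hxy⟩ => hΦ ⟨hx ▸ mem_coordSubspace_suppF x, y, hne,
    hy ▸ mem_coordSubspace_suppF y, hxy⟩, hW, by lia, by lia⟩
end

section
/- Let A ∈ ℝ^{m×N} satisfy: for every index set T ⊆ {1,…,N} with |T| ≤ m, the submatrix A_T is injective. Let s, m satisfy s < m < 2s. Define the non-uniqueness set Φ = { x ∈ ℝ^N : ‖x‖₀ ≤ s and there exists z ≠ x with ‖z‖₀ ≤ s and Az = Ax }. Then Φ is contained in a finite union of linear subspaces of ℝ^N, each of dimension at most 2s − m (which is strictly less than s). -/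
/-!
Let `C = ker f`, whose nonzero vectors have more than `r` nonzero entries. If `x ≠ z` have supports
`S`, `S'` and `f x = f z`, then `x - z` is a nonzero vector of `C` supported in `S ∪ S'`, so
`r < |S ∪ S'|`. Writing `K^S` for the space of vectors supported in `S`, we also have
`x = z + (x - z) ∈ K^S ∩ (K^{S'} + C)`, and there are only finitely many pairs `(S, S')`.
Choosing `T ⊆ S ∪ S'` with `|T| = r`, the sum of the two intersected spaces contains `K^T ⊕ C`,
so the dimension formula bounds the dimension of the intersection by
`|S| + (|S'| + dim C) - (r + dim C) ≤ 2s - r`.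
-/

open Matrix Finset

section Module

variable {K E : Type*} [DivisionRing K] [AddCommGroup E] [Module K E]

lemma finrank_inf_sup_add_finrank_le_s4 {U V C T : Submodule K E} [FiniteDimensional K U]
    [FiniteDimensional K V] [FiniteDimensional K C] (hT : T ≤ U ⊔ V) (hTC : Disjoint T C) :
    Module.finrank K ↥(U ⊓ (V ⊔ C)) + Module.finrank K T ≤
      Module.finrank K U + Module.finrank K V := by
  have : FiniteDimensional K T := Submodule.finiteDimensional_of_le hT
  have hTC_dim : Module.finrank K ↥(T ⊔ C) = Module.finrank K T + Module.finrank K C := by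
    rw [← Submodule.finrank_sup_add_finrank_inf_eq, hTC.eq_bot, finrank_bot, add_zero]
  have hTC_le : Module.finrank K ↥(T ⊔ C) ≤ Module.finrank K ↥(U ⊔ (V ⊔ C)) :=
    Submodule.finrank_mono (sup_assoc U V C ▸ sup_le_sup_right hT C)
  have hVC : Module.finrank K ↥(V ⊔ C) ≤ Module.finrank K V + Module.finrank K C :=
    Submodule.finrank_add_le_finrank_add_finrank V C
  have hU := Submodule.finrank_sup_add_finrank_inf_eq U (V ⊔ C)
  omega

end Module

section SpanSubset

variable {R ι : Type*} [Semiring R] [Finite ι]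

lemma spanSubset_mono {s t : Set ι} (h : s ⊆ t) : Pi.spanSubset R s ≤ Pi.spanSubset R t :=
  Submodule.span_mono (Set.image_mono h)

lemma spanSubset_union (s t : Set ι) :
    Pi.spanSubset R (s ∪ t) = Pi.spanSubset R s ⊔ Pi.spanSubset R t := by
  rw [Pi.spanSubset, Set.image_union, Submodule.span_union, Pi.spanSubset, Pi.spanSubset]

end SpanSubset

section Sparse

variable {ι : Type*} [Fintype ι]

lemma mem_spanSubset_support {R : Type*} [Semiring R] [DecidableEq R] (x : ι → R) :
    x ∈ Pi.spanSubset R (({i | x i ≠ 0} : Finset ι) : Set ι) :=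
  Pi.mem_spanSubset_iff.mpr fun i hi => by simpa using hi

lemma hammingNorm_le_card_of_mem_spanSubset {R : Type*} [Semiring R] [DecidableEq R]
    {S : Finset ι} {x : ι → R} (hx : x ∈ Pi.spanSubset R (S : Set ι)) :
    hammingNorm x ≤ S.card := by
  refine card_le_card fun i hi => ?_
  by_contra hiS
  exact (mem_filter.mp hi).2 (Pi.mem_spanSubset_iff.mp hx i hiS)

lemma lt_card_union_of_sub_mem {R : Type*} [Ring R] [DecidableEq R] [DecidableEq ι]
    {C : Submodule R (ι → R)} {r : ℕ} (hC : ∀ v ∈ C, hammingNorm v ≤ r → v = 0)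
    {S S' : Finset ι} {x z : ι → R} (hx : x ∈ Pi.spanSubset R (S : Set ι))
    (hz : z ∈ Pi.spanSubset R (S' : Set ι)) (hne : x ≠ z) (hxz : x - z ∈ C) :
    r < (S ∪ S').card := by
  have hsupp : x - z ∈ Pi.spanSubset R ((S ∪ S' : Finset ι) : Set ι) := by
    rw [coe_union, spanSubset_union]
    exact sub_mem (Submodule.mem_sup_left hx) (Submodule.mem_sup_right hz)
  have hlt : r < hammingNorm (x - z) := by
    by_contra! hle
    exact hne (sub_eq_zero.mp (hC _ hxz hle))
  exact hlt.trans_le (hammingNorm_le_card_of_mem_spanSubset hsupp)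

variable {K : Type*} [DivisionRing K] [DecidableEq K]

lemma finrank_spanSubset_inf_sup_add_le [DecidableEq ι] {C : Submodule K (ι → K)} {r : ℕ}
    (hC : ∀ v ∈ C, hammingNorm v ≤ r → v = 0) {S S' : Finset ι} (hr : r ≤ (S ∪ S').card) :
    Module.finrank K ↥(Pi.spanSubset K (S : Set ι) ⊓ (Pi.spanSubset K (S' : Set ι) ⊔ C)) + r ≤
      S.card + S'.card := by
  obtain ⟨T, hT, rfl⟩ := exists_subset_card_eq hr
  have hTle : Pi.spanSubset K (T : Set ι) ≤
      Pi.spanSubset K (S : Set ι) ⊔ Pi.spanSubset K (S' : Set ι) :=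
    (spanSubset_mono (mod_cast hT)).trans (spanSubset_union _ _).le
  have hTC : Disjoint (Pi.spanSubset K (T : Set ι)) C :=
    Submodule.disjoint_def.mpr fun v hvT hvC =>
      hC v hvC (hammingNorm_le_card_of_mem_spanSubset hvT)
  simpa only [Pi.dim_spanSubset, Set.ncard_coe_finset] using
    finrank_inf_sup_add_finrank_le_s4 hTle hTC

theorem stmt4_general {F : Type*} [AddCommGroup F] [Module K F] (f : (ι → K) →ₗ[K] F) {r : ℕ}
    (s : ℕ) (hf : ∀ v, hammingNorm v ≤ r → f v = 0 → v = 0) :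
    ∃ (n : ℕ) (W : Fin n → Submodule K (ι → K)),
      (∀ i, Module.finrank K (W i) + r ≤ 2 * s) ∧
      {x : ι → K | hammingNorm x ≤ s ∧ ∃ z, z ≠ x ∧ hammingNorm z ≤ s ∧ f z = f x} ⊆
        ⋃ i, (W i : Set (ι → K)) := by
  classical
  have hker : ∀ v ∈ LinearMap.ker f, hammingNorm v ≤ r → v = 0 := fun v hv hvr => hf v hvr hv
  let SupportPair := {p : Finset ι × Finset ι //
    p.1.card ≤ s ∧ p.2.card ≤ s ∧ r ≤ (p.1 ∪ p.2).card}
  let W : SupportPair → Submodule K (ι → K) := fun p =>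
    Pi.spanSubset K (p.1.1 : Set ι) ⊓ (Pi.spanSubset K (p.1.2 : Set ι) ⊔ LinearMap.ker f)
  have hW : ∀ p, Module.finrank K (W p) + r ≤ 2 * s := fun ⟨_, hS, hS', hr⟩ =>
    (finrank_spanSubset_inf_sup_add_le hker hr).trans (two_mul s ▸ add_le_add hS hS')
  obtain ⟨n, ⟨e⟩⟩ := Finite.exists_equiv_fin SupportPair
  refine ⟨n, W ∘ e.symm, fun i => hW (e.symm i), ?_⟩
  rintro x ⟨hx, z, hzx, hz, hfzx⟩
  have hxz : x - z ∈ LinearMap.ker f := LinearMap.sub_mem_ker_iff.mpr hfzx.symm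
  have hr := lt_card_union_of_sub_mem hker (mem_spanSubset_support x)
    (mem_spanSubset_support z) hzx.symm hxz
  let p : SupportPair := ⟨(_, _), hx, hz, hr.le⟩
  have hxW : x ∈ W p := ⟨mem_spanSubset_support x,
    Submodule.mem_sup.mpr ⟨z, mem_spanSubset_support z, x - z, hxz, add_sub_cancel z x⟩⟩
  exact Set.mem_iUnion.mpr ⟨e p, by simpa using hxW⟩

end Sparse

/-- For `s < m < 2s`, the non-uniqueness set `Φ` is contained in a finite union of
linear subspaces, each of dimension at most `2s - m` (which is strictly less than `s`). -/
theorem stmt4 (m N s : ℕ) (A : Matrix (Fin m) (Fin N) ℝ)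
    (hinj : ∀ T : Finset (Fin N), T.card ≤ m → colsInj A T)
    (hsm : s < m) (hms : m < 2 * s) :
    ∃ (n : ℕ) (W : Fin n → Submodule ℝ (Fin N → ℝ)),
      (∀ i, Module.finrank ℝ (W i) ≤ 2 * s - m) ∧
      ({x : Fin N → ℝ | l0 x ≤ s ∧
          ∃ z : Fin N → ℝ, z ≠ x ∧ l0 z ≤ s ∧ A.mulVec z = A.mulVec x}
        ⊆ ⋃ i, (W i : Set (Fin N → ℝ))) ∧
      2 * s - m < s := by
  obtain ⟨n, W, hW, hΦ⟩ := stmt4_general A.mulVecLin s fun v hv => hinj _ hv v (by simp)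
  exact ⟨n, W, fun i => Nat.le_sub_of_add_le (hW i), hΦ, by omega⟩
end

section
/- Let B ∈ ℝ^{m×p} satisfy the restricted isometry property of order k (1 ≤ k ≤ p) with constant δ, 0 ≤ δ < 1. Fix a column index i ∈ {1,…,p}, let a ∈ ℝ^m denote the i-th column of B (which is nonzero), let P = I − a aᵀ/‖a‖₂² be the orthogonal projection onto the orthogonal complement of span{a}, and let B' ∈ ℝ^{m×(p−1)} be the matrix whose columns are the vectors P·c as c ranges over the columns of B other than the i-th, in their original order. Then B' satisfies the restricted isometry property of order k − 1 with constant δ; that is, (1−δ)‖y‖₂² ≤ ‖B'y‖₂² ≤ (1+δ)‖y‖₂² for every y ∈ ℝ^{p−1} with at most k−1 nonzero entries. In particular the (k−1)-th order restricted isometry constant of B' is at most the k-th order restricted isometry constant of B. -/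
/-!
Let `a` be the removed column and `u` the combination of the other columns with coefficients `y`,
so that `deflate B i *ᵥ y = u - c • a` with `c = ⟪a, u⟫ / ‖a‖²`. This vector is the image under `B`
of `y` with the entry `-c` inserted at position `i`, which is at least as long as `y` and has at
most one more nonzero entry: the lower bound for `B` gives the lower bound. Since `u - c • a` is an
orthogonal projection of `u`, it is no longer than `u`, the image under `B` of `y` with `0`
inserted at position `i`: the upper bound for `B` gives the upper bound.
-/

open Matrix Finset

/-- `M` satisfies the restricted isometry property of order `k` with constant `δ`. -/
def RIPc {m p : ℕ} (M : Matrix (Fin m) (Fin p) ℝ) (k : ℕ) (δ : ℝ) : Prop :=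
  ∀ v : Fin p → ℝ, (Finset.univ.filter fun i => v i ≠ 0).card ≤ k →
    (1 - δ) * (∑ i, v i ^ 2) ≤ (∑ r, (M.mulVec v r) ^ 2) ∧
    (∑ r, (M.mulVec v r) ^ 2) ≤ (1 + δ) * (∑ i, v i ^ 2)

/-- The deflation step: remove the `j`-th column `a` of `M` and project the remaining
columns (in their original order) by `P = I - a aᵀ / ‖a‖₂²`, the orthogonal projection
onto the orthogonal complement of `span {a}`. -/
noncomputable def deflate {m p : ℕ} (M : Matrix (Fin m) (Fin (p + 1)) ℝ)
    (j : Fin (p + 1)) : Matrix (Fin m) (Fin p) ℝ :=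
  (((1 : Matrix (Fin m) (Fin m) ℝ) -
      Matrix.of fun r c => M r j * M c j / ∑ t, (M t j) ^ 2) * M).submatrix id j.succAbove

theorem mul_le_of_mul_add_le {R : Type*} [Ring R] [LinearOrder R] [IsOrderedRing R]
    {κ s t r : R} (hs : 0 ≤ s) (ht : 0 ≤ t) (hr : 0 ≤ r) (h : κ * (s + t) ≤ r) : κ * t ≤ r := by
  rcases le_total 0 κ with hκ | hκ
  · exact (mul_le_mul_of_nonneg_left (le_add_of_nonneg_left hs) hκ).trans h
  · exact (mul_nonpos_of_nonpos_of_nonneg hκ ht).trans hr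

theorem card_filter_insertNth_ne_zero_le {R : Type*} [Zero R] [DecidableEq R] {n : ℕ}
    (i : Fin (n + 1)) (c : R) (y : Fin n → R) :
    #{j | (i.insertNth c y : Fin (n + 1) → R) j ≠ 0} ≤ #{j | y j ≠ 0} + 1 := by
  rw [card_filter, card_filter, Fin.sum_univ_succAbove _ i]
  simp only [Fin.insertNth_apply_same, Fin.insertNth_apply_succAbove]
  split_ifs <;> omega

theorem dotProduct_insertNth_insertNth {R : Type*} [NonUnitalNonAssocSemiring R] {n : ℕ}
    (i : Fin (n + 1)) (c d : R) (x y : Fin n → R) :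
    (i.insertNth c x : Fin (n + 1) → R) ⬝ᵥ i.insertNth d y = c * d + x ⬝ᵥ y := by
  simp [dotProduct, Fin.sum_univ_succAbove _ i]

theorem mulVec_insertNth {m R : Type*} [NonUnitalCommSemiring R] {n : ℕ}
    (M : Matrix m (Fin (n + 1)) R) (i : Fin (n + 1)) (c : R) (y : Fin n → R) :
    M *ᵥ i.insertNth c y = c • M.col i + M.submatrix id i.succAbove *ᵥ y := by
  ext r
  simp [mulVec, dotProduct, Fin.sum_univ_succAbove _ i, mul_comm]

theorem dotProduct_self_sub_smul {m R : Type*} [Fintype m] [CommRing R] {a u : m → R} {c : R}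
    (hc : c * (a ⬝ᵥ a) = a ⬝ᵥ u) :
    (u - c • a) ⬝ᵥ (u - c • a) = u ⬝ᵥ u - c ^ 2 * (a ⬝ᵥ a) := by
  simp only [sub_dotProduct, dotProduct_sub, smul_dotProduct, dotProduct_smul, smul_eq_mul,
    dotProduct_comm u a]
  linear_combination 2 * c * hc

theorem dotProduct_self_nonneg {m R : Type*} [Fintype m] [Ring R] [LinearOrder R]
    [IsOrderedRing R] (v : m → R) : 0 ≤ v ⬝ᵥ v :=
  sum_nonneg fun r _ => mul_self_nonneg (v r)

theorem dotProduct_self_sub_smul_le {m R : Type*} [Fintype m] [CommRing R] [LinearOrder R]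
    [IsOrderedRing R] {a u : m → R} {c : R} (hc : c * (a ⬝ᵥ a) = a ⬝ᵥ u) :
    (u - c • a) ⬝ᵥ (u - c • a) ≤ u ⬝ᵥ u := by
  rw [dotProduct_self_sub_smul hc]
  exact sub_le_self _ (mul_nonneg (sq_nonneg c) (dotProduct_self_nonneg a))

theorem ripc_iff_dotProduct {m p k : ℕ} {M : Matrix (Fin m) (Fin p) ℝ} {δ : ℝ} :
    RIPc M k δ ↔ ∀ v : Fin p → ℝ, #{i | v i ≠ 0} ≤ k →
      (1 - δ) * (v ⬝ᵥ v) ≤ (M *ᵥ v) ⬝ᵥ (M *ᵥ v) ∧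
      (M *ᵥ v) ⬝ᵥ (M *ᵥ v) ≤ (1 + δ) * (v ⬝ᵥ v) := by
  simp only [RIPc, dotProduct, sq]

section Deflate

variable {m p : ℕ} (B : Matrix (Fin m) (Fin (p + 1)) ℝ) (i : Fin (p + 1)) (y : Fin p → ℝ)

theorem deflate_eq_mul_submatrix :
    deflate B i = (1 - (B.col i ⬝ᵥ B.col i)⁻¹ • vecMulVec (B.col i) (B.col i)) *
      B.submatrix id i.succAbove := by
  have hproj : (Matrix.of fun r c => B r i * B c i / ∑ t, B t i ^ 2) =
      (B.col i ⬝ᵥ B.col i)⁻¹ • vecMulVec (B.col i) (B.col i) := by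
    ext r c
    simp [vecMulVec_apply, dotProduct, sq, div_eq_inv_mul]
  rw [deflate, hproj]
  rfl

theorem deflate_mulVec :
    deflate B i *ᵥ y = B.submatrix id i.succAbove *ᵥ y -
      ((B.col i ⬝ᵥ B.submatrix id i.succAbove *ᵥ y) / (B.col i ⬝ᵥ B.col i)) • B.col i := by
  rw [deflate_eq_mul_submatrix, ← mulVec_mulVec, sub_mulVec, one_mulVec, smul_mulVec,
    vecMulVec_mulVec, op_smul_eq_smul, smul_smul, inv_mul_eq_div]

theorem exists_deflate_mulVec_eq_mulVec_insertNth :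
    ∃ c : ℝ, deflate B i *ᵥ y = B *ᵥ i.insertNth c y := by
  refine ⟨-((B.col i ⬝ᵥ B.submatrix id i.succAbove *ᵥ y) / (B.col i ⬝ᵥ B.col i)), ?_⟩
  rw [deflate_mulVec, mulVec_insertNth, neg_smul, neg_add_eq_sub]

theorem dotProduct_self_deflate_mulVec_le (ha : B.col i ≠ 0) :
    (deflate B i *ᵥ y) ⬝ᵥ (deflate B i *ᵥ y) ≤
      (B *ᵥ i.insertNth 0 y) ⬝ᵥ (B *ᵥ i.insertNth 0 y) := by
  rw [deflate_mulVec, mulVec_insertNth, zero_smul, zero_add]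
  exact dotProduct_self_sub_smul_le (div_mul_cancel₀ _ (dotProduct_self_eq_zero.not.mpr ha))

end Deflate

theorem stmt7_general {m p k : ℕ} {B : Matrix (Fin m) (Fin (p + 1)) ℝ} {δ : ℝ}
    (hRIP : RIPc B (k + 1) δ) {i : Fin (p + 1)} (ha : B.col i ≠ 0) :
    RIPc (deflate B i) k δ := by
  rw [ripc_iff_dotProduct] at hRIP ⊢
  intro y hy
  have hsparse (c : ℝ) : #{j | (i.insertNth c y : Fin (p + 1) → ℝ) j ≠ 0} ≤ k + 1 :=
    (card_filter_insertNth_ne_zero_le i c y).trans (Nat.add_le_add_right hy 1)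
  constructor
  · obtain ⟨c, hc⟩ := exists_deflate_mulVec_eq_mulVec_insertNth B i y
    have hlower := (hRIP _ (hsparse c)).1
    rw [← hc, dotProduct_insertNth_insertNth] at hlower
    exact mul_le_of_mul_add_le (mul_self_nonneg c) (dotProduct_self_nonneg y)
      (dotProduct_self_nonneg _) hlower
  · calc (deflate B i *ᵥ y) ⬝ᵥ (deflate B i *ᵥ y)
        ≤ (B *ᵥ i.insertNth 0 y) ⬝ᵥ (B *ᵥ i.insertNth 0 y) :=
          dotProduct_self_deflate_mulVec_le B i y ha
      _ ≤ (1 + δ) * ((i.insertNth 0 y : Fin (p + 1) → ℝ) ⬝ᵥ i.insertNth 0 y) :=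
          (hRIP _ (hsparse 0)).2
      _ = (1 + δ) * (y ⬝ᵥ y) := by rw [dotProduct_insertNth_insertNth, mul_zero, zero_add]

/-- Deflating a matrix satisfying RIP of order `k` with constant `δ` along any (nonzero)
column yields a matrix satisfying RIP of order `k - 1` with the same constant `δ`. -/
theorem stmt7 (m p k : ℕ) (hk1 : 1 ≤ k) (hkp : k ≤ p + 1)
    (B : Matrix (Fin m) (Fin (p + 1)) ℝ) (δ : ℝ) (hδ0 : 0 ≤ δ) (hδ1 : δ < 1)
    (hRIP : RIPc B k δ) (i : Fin (p + 1)) (ha : (fun r => B r i) ≠ 0) :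
    RIPc (deflate B i) (k - 1) δ := by
  obtain ⟨k, rfl⟩ := Nat.exists_eq_add_of_le' hk1
  exact stmt7_general hRIP ha
end

section
/- In the HTP-step setting, suppose additionally that l ∈ S* \ S. Then the l-th entry of u satisfies |u_l| ≥ (1 − δ − ((1+δ)/γ)·r) · |x*_l|, where r = ‖x*_{S*\(S∪{l})}‖₂ / ‖x*_{S*\{l}}‖₂. -/
open Matrix Finset

/-- The Euclidean norm of the restriction of `v` to the index set `T`. -/
noncomputable def pnorm {N : ℕ} (T : Finset (Fin N)) (v : Fin N → ℝ) : ℝ :=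
  Real.sqrt (∑ i ∈ T, v i ^ 2)

/-!
Let `K` be the span of the columns of `A` in `S`, `P` the orthogonal projection onto `Kᗮ`, and
`q = P a` with `a` the `l`-th column. Modulo `K`, the residual `A (x* - x) ∈ Kᗮ` is `x*_l a + A z`,
where `z` is `x*` restricted to the complement of `S ∪ {l}`, so that
`u_l = ⟪a, A (x* - x)⟫ = x*_l ‖q‖² + ⟪q, A z⟫`.
Since `q = A (e_l - w)` with `w` supported on `S`, the restricted isometry property gives
`‖q‖² ≥ 1 - δ`, and `‖q‖ ≤ ‖a‖ ≤ √(1 + δ)`. By Cauchy-Schwarz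
`|u_l| ≥ (1 - δ) |x*_l| - (1 + δ) ‖z‖`, and dominance bounds `‖z‖` by `r |x*_l| / γ`.
-/

section Projection

open Submodule

variable {𝕜 F : Type*} [RCLike 𝕜] [NormedAddCommGroup F] [InnerProductSpace 𝕜 F]
  {K : Submodule 𝕜 F} [K.HasOrthogonalProjection] {a r y : F} {c : 𝕜}

lemma inner_eq_mul_sq_norm_starProjection_orthogonal_add_inner (hr : r ∈ Kᗮ)
    (h : r - (c • a + y) ∈ K) :
    inner 𝕜 a r = c * (‖Kᗮ.starProjection a‖ : 𝕜) ^ 2 + inner 𝕜 (Kᗮ.starProjection a) y := by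
  have hPr : Kᗮ.starProjection (c • a + y) = r := by
    have hP := starProjection_orthogonal_apply_eq_zero h
    rwa [map_sub, starProjection_eq_self_iff.2 hr, sub_eq_zero, eq_comm] at hP
  have hPa : inner 𝕜 (Kᗮ.starProjection a) a = (‖Kᗮ.starProjection a‖ : 𝕜) ^ 2 := by
    rw [← inner_self_eq_norm_sq_to_K, inner_starProjection_left_eq_right,
      inner_starProjection_left_eq_right,
      starProjection_eq_self_iff.2 (starProjection_apply_mem Kᗮ a)]
  rw [← hPr, ← inner_starProjection_left_eq_right, inner_add_right, inner_smul_right, hPa]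

lemma norm_mul_sq_norm_starProjection_orthogonal_sub_le (hr : r ∈ Kᗮ)
    (h : r - (c • a + y) ∈ K) :
    ‖c‖ * ‖Kᗮ.starProjection a‖ ^ 2 - ‖Kᗮ.starProjection a‖ * ‖y‖ ≤ ‖inner 𝕜 a r‖ := by
  rw [inner_eq_mul_sq_norm_starProjection_orthogonal_add_inner hr h]
  calc ‖c‖ * ‖Kᗮ.starProjection a‖ ^ 2 - ‖Kᗮ.starProjection a‖ * ‖y‖
      ≤ ‖c * (‖Kᗮ.starProjection a‖ : 𝕜) ^ 2‖ - ‖inner 𝕜 (Kᗮ.starProjection a) y‖ := by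
        rw [norm_mul, norm_pow, RCLike.norm_ofReal, abs_norm]
        gcongr
        exact norm_inner_le_norm _ _
    _ ≤ _ := norm_sub_le_norm_add _ _

end Projection

section Support

variable {𝕜 ι : Type*} [RCLike 𝕜]

/-- The subspace of vectors supported on `S`. -/
def supportedOn (𝕜 : Type*) [RCLike 𝕜] (S : Set ι) : Submodule 𝕜 (EuclideanSpace 𝕜 ι) where
  carrier := {v | ∀ i ∉ S, v i = 0}
  zero_mem' _ _ := rfl
  add_mem' hv hw i hi := by simp [hv i hi, hw i hi]
  smul_mem' c v hv i hi := by simp [hv i hi]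

/-- The restriction of `v` to `T`, as a vector of the whole space that vanishes off `T`. -/
noncomputable def restrictTo (T : Set ι) (v : EuclideanSpace 𝕜 ι) : EuclideanSpace 𝕜 ι :=
  WithLp.toLp 2 (T.indicator v)

lemma sub_single_add_restrictTo_mem_supportedOn [DecidableEq ι] {S : Set ι} {l : ι} (hl : l ∉ S)
    (v : EuclideanSpace 𝕜 ι) :
    v - (v l • EuclideanSpace.single l 1 + restrictTo (insert l S)ᶜ v) ∈ supportedOn 𝕜 S := by
  intro i hi
  rcases eq_or_ne i l with rfl | hil
  · simp [restrictTo]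
  · simp [restrictTo, hi, hil]

variable [Fintype ι]

lemma hammingNorm_restrictTo_le (T : Set ι) (v : EuclideanSpace 𝕜 ι) :
    hammingNorm (restrictTo T v) ≤ hammingNorm v :=
  hammingNorm_comp_le_hammingNorm (fun i c ↦ T.indicator (fun _ ↦ c) i) (by simp)

lemma hammingNorm_le_card_of_mem_supportedOn {S : Finset ι} {v : EuclideanSpace 𝕜 ι}
    (hv : v ∈ supportedOn 𝕜 (S : Set ι)) : hammingNorm v ≤ #S := by
  refine Finset.card_le_card fun i hi ↦ ?_
  by_contra hS
  exact (Finset.mem_filter.1 hi).2 (hv i hS)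

lemma hammingNorm_single_le_one [DecidableEq ι] (l : ι) (c : 𝕜) :
    hammingNorm (EuclideanSpace.single l c) ≤ 1 :=
  hammingNorm_le_card_of_mem_supportedOn (S := {l}) fun i hi ↦ by simp_all

lemma one_le_norm_single_sub [DecidableEq ι] {l : ι} {w : EuclideanSpace 𝕜 ι} (hw : w l = 0) :
    1 ≤ ‖EuclideanSpace.single l (1 : 𝕜) - w‖ :=
  calc 1 = ‖(EuclideanSpace.single l (1 : 𝕜) - w) l‖ := by simp [hw]
    _ ≤ ‖EuclideanSpace.single l (1 : 𝕜) - w‖ := PiLp.norm_apply_le _ l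

end Support

section RestrictedIsometry

open Submodule

variable {𝕜 ι F : Type*} [RCLike 𝕜] [Fintype ι] [NormedAddCommGroup F] [InnerProductSpace 𝕜 F]
  {Φ : EuclideanSpace 𝕜 ι →ₗ[𝕜] F} {k : ℕ} {δ : ℝ} {S : Finset ι} {l : ι}

/-- The restricted isometry property of order `k` with constant `δ`; sparsity is measured by the
Hamming norm, which counts nonzero entries. -/
def HasRIP (Φ : EuclideanSpace 𝕜 ι →ₗ[𝕜] F) (k : ℕ) (δ : ℝ) : Prop :=
  ∀ v : EuclideanSpace 𝕜 ι, hammingNorm v ≤ k →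
    (1 - δ) * ‖v‖ ^ 2 ≤ ‖Φ v‖ ^ 2 ∧ ‖Φ v‖ ^ 2 ≤ (1 + δ) * ‖v‖ ^ 2

/-- `x` is a least-squares solution of `Φ x = b` among the vectors supported on `S`, expressed by
the normal equations: the residual is orthogonal to the image of these vectors. -/
structure IsLeastSquaresOn (Φ : EuclideanSpace 𝕜 ι →ₗ[𝕜] F) (S : Set ι) (b : F)
    (x : EuclideanSpace 𝕜 ι) : Prop where
  mem_supportedOn : x ∈ supportedOn 𝕜 S
  residual_mem_orthogonal : b - Φ x ∈ ((supportedOn 𝕜 S).map Φ)ᗮ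

lemma HasRIP.norm_apply_le (hΦ : HasRIP Φ k δ) {v : EuclideanSpace 𝕜 ι}
    (hv : hammingNorm v ≤ k) : ‖Φ v‖ ≤ √(1 + δ) * ‖v‖ := by
  rw [← Real.sqrt_sq (norm_nonneg v), ← Real.sqrt_mul' _ (sq_nonneg _)]
  exact Real.le_sqrt_of_sq_le (hΦ v hv).2

lemma HasRIP.eq_zero_of_apply_eq_zero (hΦ : HasRIP Φ k δ) (hδ : δ < 1) {v : EuclideanSpace 𝕜 ι}
    (hv : hammingNorm v ≤ k) (h : Φ v = 0) : v = 0 := by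
  have hle := (hΦ v hv).1
  rw [h, norm_zero, zero_pow two_ne_zero] at hle
  have hsq : ‖v‖ ^ 2 ≤ 0 := nonpos_of_mul_nonpos_right hle (sub_pos.2 hδ)
  exact norm_eq_zero.1 (pow_eq_zero_iff two_ne_zero |>.1 (hsq.antisymm (sq_nonneg _)))

lemma HasRIP.one_add_nonneg (hΦ : HasRIP Φ k δ) (hk : 1 ≤ k) (l : ι) : 0 ≤ 1 + δ := by
  classical
  have h := (hΦ (EuclideanSpace.single l 1) ((hammingNorm_single_le_one l 1).trans hk)).2
  rw [PiLp.norm_single, norm_one, one_pow, mul_one] at h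
  exact (sq_nonneg _).trans h

lemma HasRIP.norm_apply_single_le [DecidableEq ι] (hΦ : HasRIP Φ k δ) (hk : 1 ≤ k) (l : ι) :
    ‖Φ (EuclideanSpace.single l 1)‖ ≤ √(1 + δ) := by
  simpa using hΦ.norm_apply_le ((hammingNorm_single_le_one l 1).trans hk)

lemma HasRIP.one_sub_le_sq_norm_starProjection [DecidableEq ι] (hΦ : HasRIP Φ k δ)
    (hS : #S < k) (hl : l ∉ S) :
    1 - δ ≤ ‖((supportedOn 𝕜 (S : Set ι)).map Φ)ᗮ.starProjection
      (Φ (EuclideanSpace.single l 1))‖ ^ 2 := by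
  obtain ⟨w, hw, hΦw⟩ := starProjection_apply_mem ((supportedOn 𝕜 (S : Set ι)).map Φ)
    (Φ (EuclideanSpace.single l 1))
  rw [starProjection_orthogonal_val, ← hΦw, ← map_sub]
  have hsparse : hammingNorm (EuclideanSpace.single l (1 : 𝕜) - w) ≤ k := by
    refine (hammingNorm_le_card_of_mem_supportedOn (S := insert l S) fun i hi ↦ ?_).trans
      ((card_insert_le l S).trans hS)
    rw [Finset.mem_coe, mem_insert, not_or] at hi
    simp [hi.1, hw i hi.2]
  rcases le_total δ 1 with hδ | hδ
  · refine le_trans ?_ (hΦ _ hsparse).1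
    exact le_mul_of_one_le_right (sub_nonneg.2 hδ)
      (one_le_pow₀ (one_le_norm_single_sub (hw l hl)))
  · exact (sub_nonpos.2 hδ).trans (sq_nonneg _)

lemma HasRIP.sub_le_norm_inner_residual [DecidableEq ι] (hΦ : HasRIP Φ k δ)
    {xs x : EuclideanSpace 𝕜 ι} (hxs : hammingNorm xs ≤ k) (hS : #S < k)
    (hx : IsLeastSquaresOn Φ S (Φ xs) x) (hl : l ∉ S) :
    (1 - δ) * ‖xs l‖ - (1 + δ) * ‖restrictTo (insert l (S : Set ι))ᶜ xs‖ ≤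
      ‖inner 𝕜 (Φ (EuclideanSpace.single l 1)) (Φ xs - Φ x)‖ := by
  set z := restrictTo (insert l (S : Set ι))ᶜ xs
  set K := (supportedOn 𝕜 (S : Set ι)).map Φ
  set q := Kᗮ.starProjection (Φ (EuclideanSpace.single l 1))
  have hdecomp : Φ xs - Φ x - (xs l • Φ (EuclideanSpace.single l 1) + Φ z) ∈ K := by
    rw [sub_right_comm, ← map_smul, ← map_add, ← map_sub, ← map_sub]
    exact mem_map_of_mem
      (sub_mem (sub_single_add_restrictTo_mem_supportedOn hl xs) hx.mem_supportedOn)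
  have hlower : ‖xs l‖ * ‖q‖ ^ 2 - ‖q‖ * ‖Φ z‖ ≤
      ‖inner 𝕜 (Φ (EuclideanSpace.single l 1)) (Φ xs - Φ x)‖ :=
    norm_mul_sq_norm_starProjection_orthogonal_sub_le hx.residual_mem_orthogonal hdecomp
  have hk : 1 ≤ k := Nat.one_le_of_lt hS
  have hcross : ‖q‖ * ‖Φ z‖ ≤ (1 + δ) * ‖z‖ :=
    calc ‖q‖ * ‖Φ z‖ ≤ √(1 + δ) * (√(1 + δ) * ‖z‖) :=
          mul_le_mul ((norm_starProjection_apply_le _ _).trans (hΦ.norm_apply_single_le hk l))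
            (hΦ.norm_apply_le ((hammingNorm_restrictTo_le _ _).trans hxs))
            (norm_nonneg _) (Real.sqrt_nonneg _)
      _ = (1 + δ) * ‖z‖ := by rw [← mul_assoc, Real.mul_self_sqrt (hΦ.one_add_nonneg hk l)]
  have hmain : ‖xs l‖ * (1 - δ) ≤ ‖xs l‖ * ‖q‖ ^ 2 :=
    mul_le_mul_of_nonneg_left (hΦ.one_sub_le_sq_norm_starProjection hS hl) (norm_nonneg _)
  linarith

lemma adjoint_apply_eq_inner [DecidableEq ι] [FiniteDimensional 𝕜 F]
    (Φ : EuclideanSpace 𝕜 ι →ₗ[𝕜] F) (y : F) (l : ι) :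
    LinearMap.adjoint Φ y l = inner 𝕜 (Φ (EuclideanSpace.single l 1)) y := by
  rw [← LinearMap.adjoint_inner_right, EuclideanSpace.inner_single_left, map_one, one_mul]

theorem stmt11_general [FiniteDimensional 𝕜 F] (hΦ : HasRIP Φ k δ) {γ : ℝ} (hγ : 0 < γ)
    {xs x u : EuclideanSpace 𝕜 ι} (hxs : hammingNorm xs ≤ k) (hS : #S < k)
    (hx : IsLeastSquaresOn Φ S (Φ xs) x) (hne : restrictTo {l}ᶜ xs ≠ 0)
    (hdom : γ * ‖restrictTo {l}ᶜ xs‖ ≤ ‖xs l‖)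
    (hu : u = x + LinearMap.adjoint Φ (Φ xs - Φ x)) (hl : l ∉ S) :
    (1 - δ - ((1 + δ) / γ) *
        (‖restrictTo (insert l (S : Set ι))ᶜ xs‖ / ‖restrictTo {l}ᶜ xs‖)) * ‖xs l‖ ≤ ‖u l‖ := by
  classical
  set Z := ‖restrictTo (insert l (S : Set ι))ᶜ xs‖
  set D := ‖restrictTo {l}ᶜ xs‖
  have hD : 0 < D := norm_pos_iff.2 hne
  have hδ : 0 ≤ 1 + δ := hΦ.one_add_nonneg (Nat.one_le_of_lt hS) l
  have hul : u l = inner 𝕜 (Φ (EuclideanSpace.single l 1)) (Φ xs - Φ x) := by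
    rw [hu, PiLp.add_apply, hx.mem_supportedOn l hl, zero_add, adjoint_apply_eq_inner]
  calc (1 - δ - (1 + δ) / γ * (Z / D)) * ‖xs l‖
      = (1 - δ) * ‖xs l‖ - (1 + δ) * Z * (‖xs l‖ / (γ * D)) := by field_simp
    _ ≤ (1 - δ) * ‖xs l‖ - (1 + δ) * Z :=
        sub_le_sub_left
          (le_mul_of_one_le_right (by positivity) ((one_le_div (by positivity)).2 hdom)) _
    _ ≤ ‖u l‖ := hul ▸ hΦ.sub_le_norm_inner_residual hxs hS hx hl

end RestrictedIsometry

section Matrix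

lemma submatrix_mulVec_comp {R κ ι σ : Type*} [NonUnitalNonAssocSemiring R] [Fintype ι]
    [Fintype σ] (A : Matrix κ ι R) {f : σ → ι} (hf : f.Injective) {v : ι → R}
    (hv : ∀ i ∉ Set.range f, v i = 0) : A.submatrix id f *ᵥ (v ∘ f) = A *ᵥ v :=
  funext fun r ↦ Fintype.sum_of_injective f hf _ (fun i ↦ A r i * v i)
    (fun i hi ↦ by rw [hv i hi, mul_zero]) fun _ ↦ rfl

variable {𝕜 ι κ : Type*} [RCLike 𝕜] [Fintype ι] [Fintype κ] [DecidableEq ι]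

open scoped ComplexOrder in
lemma conjTranspose_mulVec_sub_mulVec_inv_gram {B : Matrix κ ι 𝕜}
    (hB : Function.Injective B.mulVec) (b : κ → 𝕜) :
    Bᴴ *ᵥ (b - B *ᵥ ((Bᴴ * B)⁻¹ * Bᴴ) *ᵥ b) = 0 := by
  have hdet : IsUnit (Bᴴ * B).det :=
    (isUnit_iff_isUnit_det _).1 (PosDef.conjTranspose_mul_self B hB).isUnit
  rw [mulVec_sub, mulVec_mulVec, mulVec_mulVec, mul_nonsing_inv_cancel_left _ _ hdet, sub_self]

variable {A : Matrix κ ι 𝕜} {S : Finset ι}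

lemma HasRIP.injective_submatrix_mulVec {k : ℕ} {δ : ℝ} (hA : HasRIP (toEuclideanLin A) k δ)
    (hδ : δ < 1) (hS : #S ≤ k) :
    Function.Injective (A.submatrix id ((↑) : S → ι)).mulVec := by
  refine (injective_iff_map_eq_zero (A.submatrix id ((↑) : S → ι)).mulVecLin).2 fun c hc ↦ ?_
  set v : ι → 𝕜 := Function.extend (↑) c 0
  have hv : ∀ i ∉ Set.range ((↑) : S → ι), v i = 0 := fun i hi ↦
    Function.extend_apply' _ _ _ hi
  have hvc : v ∘ (↑) = c := Function.extend_comp Subtype.val_injective c 0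
  have hAv : A *ᵥ v = 0 := by
    rw [← submatrix_mulVec_comp A Subtype.val_injective hv, hvc]
    exact hc
  have hsparse : hammingNorm (WithLp.toLp 2 v) ≤ k :=
    (hammingNorm_le_card_of_mem_supportedOn fun i hi ↦ hv i (by simpa using hi)).trans hS
  have hv0 := hA.eq_zero_of_apply_eq_zero hδ hsparse (by
    rw [toLpLin_toLp, toLin'_apply, hAv, WithLp.toLp_zero])
  rw [← hvc, (WithLp.toLp_eq_zero 2).1 hv0, Pi.zero_comp]

lemma isLeastSquaresOn_toEuclideanLin
    (hA : Function.Injective (A.submatrix id ((↑) : S → ι)).mulVec)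
    {b : κ → 𝕜} {x : ι → 𝕜} (hx0 : ∀ i ∉ S, x i = 0)
    (hx : ∀ i : S, x i = ((((A.submatrix id ((↑) : S → ι))ᴴ * A.submatrix id ((↑) : S → ι))⁻¹ *
      (A.submatrix id ((↑) : S → ι))ᴴ) *ᵥ b) i) :
    IsLeastSquaresOn (toEuclideanLin A) S (WithLp.toLp 2 b) (WithLp.toLp 2 x) := by
  classical
  have hnormal : (A.submatrix id ((↑) : S → ι))ᴴ *ᵥ (b - A *ᵥ x) = 0 := by
    rw [← submatrix_mulVec_comp A Subtype.val_injective (by simpa using hx0),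
      show x ∘ ((↑) : S → ι) = _ from funext hx]
    exact conjTranspose_mulVec_sub_mulVec_inv_gram hA b
  refine ⟨hx0, ?_⟩
  rintro _ ⟨v, hv, rfl⟩
  rw [← LinearMap.adjoint_inner_right, ← toEuclideanLin_conjTranspose_eq_adjoint, PiLp.inner_apply]
  refine Finset.sum_eq_zero fun i _ ↦ ?_
  by_cases hi : i ∈ S
  · have hi0 : toEuclideanLin Aᴴ (WithLp.toLp 2 b - toEuclideanLin A (WithLp.toLp 2 x)) i = 0 :=
      congrFun hnormal ⟨i, hi⟩
    rw [hi0, inner_zero_right]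
  · rw [hv i hi, inner_zero_left]

lemma toLp_eq_add_adjoint_toEuclideanLin {x u v : ι → 𝕜}
    (hu : ∀ j, u j = x j + (Aᴴ *ᵥ (A *ᵥ v - A *ᵥ x)) j) :
    WithLp.toLp 2 u = WithLp.toLp 2 x + LinearMap.adjoint (toEuclideanLin A)
      (toEuclideanLin A (WithLp.toLp 2 v) - toEuclideanLin A (WithLp.toLp 2 x)) := by
  classical
  rw [← toEuclideanLin_conjTranspose_eq_adjoint]
  exact congrArg (WithLp.toLp 2) (funext hu)

end Matrix

lemma hasRIP_toEuclideanLin_iff {m N k : ℕ} {A : Matrix (Fin m) (Fin N) ℝ} {δ : ℝ} :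
    HasRIP (toEuclideanLin A) k δ ↔ ∀ v : Fin N → ℝ, (suppF v).card ≤ k →
      (1 - δ) * (∑ i, v i ^ 2) ≤ (∑ r, (A *ᵥ v) r ^ 2) ∧
      (∑ r, (A *ᵥ v) r ^ 2) ≤ (1 + δ) * (∑ i, v i ^ 2) := by
  simp only [HasRIP, EuclideanSpace.real_norm_sq_eq]
  exact ⟨fun h v ↦ h (WithLp.toLp 2 v), fun h v ↦ h v⟩

lemma pnorm_suppF_sdiff {N : ℕ} (T : Finset (Fin N)) (v : Fin N → ℝ) :
    pnorm (suppF v \ T) v = ‖restrictTo (T : Set (Fin N))ᶜ (WithLp.toLp 2 v)‖ := by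
  rw [pnorm, EuclideanSpace.norm_eq]
  congr 1
  refine Finset.sum_subset_zero_on_sdiff (subset_univ _) (fun i hi ↦ ?_) fun i hi ↦ ?_
  · by_cases hiT : i ∈ T <;> simp_all [suppF, restrictTo]
  · simp_all [restrictTo]

lemma pnorm_suppF_erase {N : ℕ} (l : Fin N) (v : Fin N → ℝ) :
    pnorm ((suppF v).erase l) v = ‖restrictTo {l}ᶜ (WithLp.toLp 2 v)‖ := by
  rw [← sdiff_singleton_eq_erase, pnorm_suppF_sdiff, coe_singleton]

/-- HTP step, lower bound on `|u_l|` when `l ∈ S* \ S`. -/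
theorem stmt11 (m N s : ℕ) (A : Matrix (Fin m) (Fin N) ℝ) (δ γ : ℝ)
    (hδ0 : 0 ≤ δ) (hδ1 : δ < 1) (hγ : 0 < γ)
    (hRIP : ∀ v : Fin N → ℝ, (suppF v).card ≤ s + 2 →
      (1 - δ) * (∑ i, v i ^ 2) ≤ (∑ r, (A.mulVec v r) ^ 2) ∧
      (∑ r, (A.mulVec v r) ^ 2) ≤ (1 + δ) * (∑ i, v i ^ 2))
    (xs : Fin N → ℝ) (hxs : (suppF xs).card ≤ s)
    (S : Finset (Fin N)) (hScard : S.card = s)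
    (x : Fin N → ℝ)
    (hx0 : ∀ i, i ∉ S → x i = 0)
    (hxls : ∀ i : {i // i ∈ S}, x i.1 =
      ((((A.submatrix id ((↑) : {i // i ∈ S} → Fin N))ᵀ *
          A.submatrix id ((↑) : {i // i ∈ S} → Fin N))⁻¹ *
        (A.submatrix id ((↑) : {i // i ∈ S} → Fin N))ᵀ).mulVec (A.mulVec xs)) i)
    (l : Fin N) (hl : ∀ i, |xs i| ≤ |xs l|)
    (hne : pnorm ((suppF xs).erase l) xs ≠ 0)
    (hdom : γ * pnorm ((suppF xs).erase l) xs ≤ |xs l|)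
    (u : Fin N → ℝ)
    (hu : ∀ j, u j = x j + Aᵀ.mulVec (A.mulVec xs - A.mulVec x) j)
    (hlmem : l ∈ suppF xs \ S) :
    (1 - δ - ((1 + δ) / γ) *
        (pnorm (suppF xs \ insert l S) xs / pnorm ((suppF xs).erase l) xs)) * |xs l|
      ≤ |u l| := by
  have hA : HasRIP (toEuclideanLin A) (s + 2) δ := hasRIP_toEuclideanLin_iff.2 hRIP
  have hx := isLeastSquaresOn_toEuclideanLin
    (hA.injective_submatrix_mulVec hδ1 (by lia)) hx0 hxls
  have hu_adjoint := toLp_eq_add_adjoint_toEuclideanLin hu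
  simp only [pnorm_suppF_erase, pnorm_suppF_sdiff, coe_insert] at hne hdom ⊢
  exact stmt11_general hA hγ (hxs.trans (Nat.le_add_right s 2)) (by lia) hx
    (norm_ne_zero_iff.1 hne) hdom hu_adjoint (mem_sdiff.1 hlmem).2
end

section
/- In the HTP-step setting, suppose additionally that l ∈ S* \ S, that δ < 1/2, and that the dominance factor satisfies γ > (2(1+δ)/(1−2δ))·r, where r = ‖x*_{S*\(S∪{l})}‖₂ / ‖x*_{S*\{l}}‖₂. Then |u_l| > |u_j| for every index j ∉ S ∪ S*. -/
/-!
Let `P` be the orthogonal projection onto the complement of the span of the columns `a_i`, `i ∈ S`.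
The residual of the least-squares fit is `P b`, so `u_j = ⟪P a_j, P b⟫` for `j ∉ S`. Projecting out
`S` preserves the restricted isometry property of the remaining columns: norms do not increase, and
a projected combination is again a combination of columns, with extra coefficients on `S` only.
Hence `‖P a_l‖² ≥ 1 - δ`, `‖P a_j‖² ≤ 1 + δ` and, by polarization, `|⟪P a_j, P a_l⟫| ≤ δ`. As
`P b = x*_l P a_l + P A x*_T` with `T = S* \ (S ∪ {l})`, for `j ∉ S`, `j ≠ l`, this yields
`|u_l| - |u_j| ≥ (1 - 2δ) |x*_l| - 2 (1 + δ) ‖x*_T‖`,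
and the dominance condition makes the right-hand side positive.
-/

open Matrix Finset

section ColumnFamily

variable {𝕜 E ι : Type*} [RCLike 𝕜] [NormedAddCommGroup E] [InnerProductSpace 𝕜 E]
  {a : ι → E} {k : ℕ} {δ : ℝ} {S : Finset ι}

variable (𝕜) in
/-- The restricted isometry property of order `k` with constant `δ` of the matrix with columns `a`,
quantified over coefficient families on index sets of size at most `k` rather than over `k`-sparse
vectors, so that the index type may be infinite. -/
def RestrictedIsometry (a : ι → E) (k : ℕ) (δ : ℝ) : Prop :=
  ∀ (T : Finset ι) (v : ι → 𝕜), #T ≤ k →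
    (1 - δ) * ∑ i ∈ T, ‖v i‖ ^ 2 ≤ ‖∑ i ∈ T, v i • a i‖ ^ 2 ∧
      ‖∑ i ∈ T, v i • a i‖ ^ 2 ≤ (1 + δ) * ∑ i ∈ T, ‖v i‖ ^ 2

variable (𝕜) in
/-- The span of the columns `a i` with `i ∈ S`, i.e. the range of the submatrix `A_S`. -/
def columnSpan (a : ι → E) (S : Finset ι) : Submodule 𝕜 E :=
  Submodule.span 𝕜 (a '' S)

instance : FiniteDimensional 𝕜 (columnSpan 𝕜 a S) :=
  FiniteDimensional.span_of_finite 𝕜 (S.finite_toSet.image a)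

variable (𝕜) in
/-- The orthogonal projection onto the complement of the columns indexed by `S`, which maps a vector
to the residual of its least-squares fit by these columns. -/
noncomputable abbrev residualProj (a : ι → E) (S : Finset ι) : E →L[𝕜] E :=
  (columnSpan 𝕜 a S)ᗮ.starProjection

lemma mem_columnSpan {y : E} : y ∈ columnSpan 𝕜 a S ↔ ∃ c : ι → 𝕜, ∑ i ∈ S, c i • a i = y :=
  Submodule.mem_span_image_finset_iff_exists_fun' 𝕜

lemma column_mem_columnSpan {i : ι} (hi : i ∈ S) : a i ∈ columnSpan 𝕜 a S :=
  Submodule.subset_span ⟨i, hi, rfl⟩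

lemma residualProj_apply (y : E) :
    residualProj 𝕜 a S y = y - (columnSpan 𝕜 a S).starProjection y :=
  Submodule.starProjection_orthogonal_val y

lemma residualProj_column {i : ι} (hi : i ∈ S) : residualProj 𝕜 a S (a i) = 0 :=
  Submodule.starProjection_orthogonal_apply_eq_zero (column_mem_columnSpan hi)

lemma inner_residualProj_residualProj (y z : E) :
    inner 𝕜 (residualProj 𝕜 a S y) (residualProj 𝕜 a S z) = inner 𝕜 y (residualProj 𝕜 a S z) := by
  rw [Submodule.inner_starProjection_left_eq_right,
    Submodule.starProjection_eq_self_iff.2 (Submodule.starProjection_apply_mem _ z)]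

namespace RestrictedIsometry

lemma one_sub_le_norm_sq (h : RestrictedIsometry 𝕜 a k δ) (hk : 1 ≤ k) (i : ι) :
    1 - δ ≤ ‖a i‖ ^ 2 := by
  simpa using (h {i} 1 (by simpa using hk)).1

lemma norm_sq_le_one_add (h : RestrictedIsometry 𝕜 a k δ) (hk : 1 ≤ k) (i : ι) :
    ‖a i‖ ^ 2 ≤ 1 + δ := by
  simpa using (h {i} 1 (by simpa using hk)).2

lemma norm_inner_le (h : RestrictedIsometry 𝕜 a k δ) (hk : 2 ≤ k) {i j : ι} (hij : i ≠ j) :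
    ‖inner 𝕜 (a i) (a j)‖ ≤ δ := by
  classical
  -- Rotating `a j` by a phase makes the inner product real, so that polarization computes its norm.
  obtain ⟨c, hc, hcij⟩ := RCLike.exists_norm_eq_mul_self (inner 𝕜 (a i) (a j))
  have h_pair (d : 𝕜) (hd : ‖d‖ = 1) :
      (1 - δ) * 2 ≤ ‖a i + d • a j‖ ^ 2 ∧ ‖a i + d • a j‖ ^ 2 ≤ (1 + δ) * 2 := by
    have := h {i, j} (Function.update (fun _ => d) i 1) (card_le_two.trans hk)
    simpa [sum_pair hij, hij.symm, hd, one_add_one_eq_two] using this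
  have h_inner : RCLike.re (inner 𝕜 (a i) (c • a j)) = ‖inner 𝕜 (a i) (a j)‖ := by
    rw [inner_smul_right, ← hcij, RCLike.ofReal_re]
  have h_add := norm_add_sq (𝕜 := 𝕜) (a i) (c • a j)
  have h_sub := norm_sub_sq (𝕜 := 𝕜) (a i) (c • a j)
  have h_upper := (h_pair c hc).2
  have h_lower := (h_pair (-c) (by rwa [norm_neg])).1
  rw [neg_smul, ← sub_eq_add_neg] at h_lower
  linarith

lemma norm_sum_smul_le (h : RestrictedIsometry 𝕜 a k δ) {T : Finset ι} (hT : #T ≤ k) (v : ι → 𝕜) :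
    ‖∑ i ∈ T, v i • a i‖ ≤ √(1 + δ) * √(∑ i ∈ T, ‖v i‖ ^ 2) := by
  rw [← Real.sqrt_mul' _ (sum_nonneg fun i _ => sq_nonneg ‖v i‖)]
  exact Real.le_sqrt_of_sq_le (h T v hT).2

lemma linearIndepOn (h : RestrictedIsometry 𝕜 a k δ) (hδ : δ < 1) (hS : #S ≤ k) :
    LinearIndepOn 𝕜 a (S : Set ι) := by
  refine linearIndepOn_finset_iff.2 fun c hc => ?_
  have h_le : ∑ i ∈ S, ‖c i‖ ^ 2 ≤ 0 := by
    have := (h S c hS).1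
    rw [hc, norm_zero, zero_pow two_ne_zero] at this
    exact nonpos_of_mul_nonpos_right this (sub_pos.2 hδ)
  have h_zero := (sum_eq_zero_iff_of_nonneg fun i _ => sq_nonneg ‖c i‖).1
    (h_le.antisymm (sum_nonneg fun i _ => sq_nonneg ‖c i‖))
  simpa using h_zero

lemma norm_sq_sum_add_sum (h : RestrictedIsometry 𝕜 a k δ) {T : Finset {i // i ∉ S}}
    (hT : #S + #T ≤ k) (c : ι → 𝕜) (v : {i // i ∉ S} → 𝕜) :
    (1 - δ) * (∑ i ∈ S, ‖c i‖ ^ 2 + ∑ i ∈ T, ‖v i‖ ^ 2) ≤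
        ‖∑ i ∈ S, c i • a i + ∑ i ∈ T, v i • a i‖ ^ 2 ∧
      ‖∑ i ∈ S, c i • a i + ∑ i ∈ T, v i • a i‖ ^ 2 ≤
        (1 + δ) * (∑ i ∈ S, ‖c i‖ ^ 2 + ∑ i ∈ T, ‖v i‖ ^ 2) := by
  classical
  have h_disj : Disjoint S (T.map (.subtype _)) := by
    simp +contextual [disjoint_right]
  let w (i : ι) : 𝕜 := if hi : i ∈ S then c i else v ⟨i, hi⟩
  have hw_on {i : ι} (hi : i ∈ S) : w i = c i := dif_pos hi
  have hw_off (i : {i // i ∉ S}) : w i = v i := dif_neg i.2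
  have h_sum : ∑ i ∈ S.disjUnion _ h_disj, w i • a i =
      ∑ i ∈ S, c i • a i + ∑ i ∈ T, v i • a i := by
    rw [sum_disjUnion, sum_map]
    exact congrArg₂ _ (sum_congr rfl fun i hi => by rw [hw_on hi])
      (sum_congr rfl fun i _ => by rw [Function.Embedding.coe_subtype, hw_off])
  have h_sq : ∑ i ∈ S.disjUnion _ h_disj, ‖w i‖ ^ 2 =
      ∑ i ∈ S, ‖c i‖ ^ 2 + ∑ i ∈ T, ‖v i‖ ^ 2 := by
    rw [sum_disjUnion, sum_map]
    exact congrArg₂ _ (sum_congr rfl fun i hi => by rw [hw_on hi])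
      (sum_congr rfl fun i _ => by rw [Function.Embedding.coe_subtype, hw_off])
  rw [← h_sum, ← h_sq]
  exact h _ w (by rwa [card_disjUnion, card_map])

lemma residualProj_columns (h : RestrictedIsometry 𝕜 a k δ) {n : ℕ} (hn : #S + n ≤ k) :
    RestrictedIsometry 𝕜 (fun i : {i // i ∉ S} => residualProj 𝕜 a S (a i)) n δ := by
  intro T v hT
  set y := ∑ i ∈ T, v i • a i with hy
  have h_proj : ∑ i ∈ T, v i • residualProj 𝕜 a S (a i) = residualProj 𝕜 a S y := by
    simp only [hy, map_sum, map_smul]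
  have h_bounds := h.norm_sq_sum_add_sum (T := T) (by omega) (v := v)
  rw [h_proj]
  constructor
  · obtain ⟨c, hc⟩ := mem_columnSpan.1
      (neg_mem ((columnSpan 𝕜 a S).starProjection_apply_mem y))
    have h_lower := (h_bounds c).1
    rw [hc, neg_add_eq_sub, ← residualProj_apply] at h_lower
    have hc_nonneg : 0 ≤ ∑ i ∈ S, ‖c i‖ ^ 2 := sum_nonneg fun i _ => sq_nonneg ‖c i‖
    have hv_nonneg : 0 ≤ ∑ i ∈ T, ‖v i‖ ^ 2 := sum_nonneg fun i _ => sq_nonneg ‖v i‖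
    rcases le_total δ 1 with hδ | hδ
    · exact (mul_le_mul_of_nonneg_left (le_add_of_nonneg_left hc_nonneg)
        (sub_nonneg.2 hδ)).trans h_lower
    · exact (mul_nonpos_of_nonpos_of_nonneg (sub_nonpos.2 hδ) hv_nonneg).trans (sq_nonneg _)
  · have h_upper := (h_bounds 0).2
    simp only [Pi.zero_apply, zero_smul, sum_const_zero, norm_zero, zero_pow two_ne_zero,
      zero_add] at h_upper
    exact (pow_le_pow_left₀ (norm_nonneg _) (Submodule.norm_starProjection_apply_le _ y) 2).trans
      h_upper

lemma norm_inner_residualProj_le (h : RestrictedIsometry 𝕜 a k δ) (hk : 1 ≤ k) (i : ι) (y : E) :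
    ‖inner 𝕜 (a i) (residualProj 𝕜 a S y)‖ ≤ √(1 + δ) * ‖y‖ :=
  (norm_inner_le_norm _ _).trans <| mul_le_mul (Real.le_sqrt_of_sq_le (h.norm_sq_le_one_add hk i))
    (Submodule.norm_starProjection_apply_le _ y) (norm_nonneg _) (Real.sqrt_nonneg _)

lemma norm_inner_residualProj_sum_le (h : RestrictedIsometry 𝕜 a k δ) (hk : 1 ≤ k) (i : ι)
    {T : Finset ι} (hT : #T ≤ k) (v : ι → 𝕜) :
    ‖inner 𝕜 (a i) (residualProj 𝕜 a S (∑ j ∈ T, v j • a j))‖ ≤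
      (1 + δ) * √(∑ j ∈ T, ‖v j‖ ^ 2) := by
  have hδ : 0 ≤ 1 + δ := (sq_nonneg _).trans (h.norm_sq_le_one_add hk i)
  calc ‖inner 𝕜 (a i) (residualProj 𝕜 a S (∑ j ∈ T, v j • a j))‖
    _ ≤ √(1 + δ) * ‖∑ j ∈ T, v j • a j‖ := h.norm_inner_residualProj_le hk i _
    _ ≤ √(1 + δ) * (√(1 + δ) * √(∑ j ∈ T, ‖v j‖ ^ 2)) :=
      mul_le_mul_of_nonneg_left (h.norm_sum_smul_le hT v) (Real.sqrt_nonneg _)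
    _ = (1 + δ) * √(∑ j ∈ T, ‖v j‖ ^ 2) := by rw [← mul_assoc, Real.mul_self_sqrt hδ]

end RestrictedIsometry

lemma inner_residualProj_sum [DecidableEq ι] {R : Finset ι} {l : ι} (hlR : l ∈ R) (hlS : l ∉ S)
    (v : ι → 𝕜) (y : E) :
    inner 𝕜 y (residualProj 𝕜 a S (∑ i ∈ R, v i • a i)) =
      v l * inner 𝕜 y (residualProj 𝕜 a S (a l)) +
        inner 𝕜 y (residualProj 𝕜 a S (∑ i ∈ R \ insert l S, v i • a i)) := by
  have h_sdiff : ∑ i ∈ R \ S, v i • residualProj 𝕜 a S (a i) =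
      ∑ i ∈ R, v i • residualProj 𝕜 a S (a i) :=
    sum_subset sdiff_subset fun i hiR hi => by
      rw [residualProj_column (by simpa [hiR] using hi), smul_zero]
  rw [← inner_smul_right, ← inner_add_right]
  simp only [map_sum, map_smul]
  rw [← h_sdiff, sdiff_insert,
    add_sum_erase _ (fun i => v i • residualProj 𝕜 a S (a i)) (mem_sdiff.2 ⟨hlR, hlS⟩)]

theorem stmt13_general [DecidableEq ι] {R : Finset ι} {l : ι} {xs x u : ι → 𝕜} {b : E}
    (hRIP : RestrictedIsometry 𝕜 a k δ) (hS : #S + 2 ≤ k) (hR : #(R \ insert l S) ≤ k)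
    (hb : ∑ i ∈ R, xs i • a i = b) (hx0 : ∀ i ∉ S, x i = 0)
    (hx : ∑ i ∈ S, x i • a i = (columnSpan 𝕜 a S).starProjection b)
    (hu : ∀ j, u j = x j + inner 𝕜 (a j) (b - ∑ i ∈ S, x i • a i))
    (hlR : l ∈ R) (hlS : l ∉ S)
    (hdom : 2 * (1 + δ) * √(∑ i ∈ R \ insert l S, ‖xs i‖ ^ 2) < (1 - 2 * δ) * ‖xs l‖)
    {j : ι} (hjS : j ∉ S) (hjl : j ≠ l) :
    ‖u j‖ < ‖u l‖ := by
  have hP := hRIP.residualProj_columns hS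
  set P := residualProj 𝕜 a S
  set y := ∑ i ∈ R \ insert l S, xs i • a i
  have h_coeff {i : ι} (hi : i ∉ S) :
      u i = xs l * inner 𝕜 (P (a i)) (P (a l)) + inner 𝕜 (a i) (P y) := by
    rw [hu, hx0 i hi, zero_add, hx, ← residualProj_apply, ← hb, inner_residualProj_sum hlR hlS,
      inner_residualProj_residualProj]
  have h_rest (i : ι) : ‖inner 𝕜 (a i) (P y)‖ ≤ (1 + δ) * √(∑ i ∈ R \ insert l S, ‖xs i‖ ^ 2) :=
    hRIP.norm_inner_residualProj_sum_le (by omega) i hR xs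
  have h_cross : ‖inner 𝕜 (P (a j)) (P (a l))‖ ≤ δ :=
    hP.norm_inner_le le_rfl (i := ⟨j, hjS⟩) (j := ⟨l, hlS⟩) (by simpa using hjl)
  have h_diag : 1 - δ ≤ ‖inner 𝕜 (P (a l)) (P (a l))‖ := by
    rw [inner_self_eq_norm_sq_to_K, norm_pow, RCLike.norm_ofReal, abs_norm]
    exact hP.one_sub_le_norm_sq one_le_two ⟨l, hlS⟩
  have h_upper : ‖u j‖ ≤ ‖xs l‖ * δ + (1 + δ) * √(∑ i ∈ R \ insert l S, ‖xs i‖ ^ 2) := by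
    rw [h_coeff hjS]
    refine (norm_add_le _ _).trans (add_le_add ?_ (h_rest j))
    rw [norm_mul]
    gcongr
  have h_lower : ‖xs l‖ * (1 - δ) - (1 + δ) * √(∑ i ∈ R \ insert l S, ‖xs i‖ ^ 2) ≤ ‖u l‖ := by
    rw [h_coeff hlS]
    refine le_trans (sub_le_sub ?_ (h_rest l)) (norm_sub_le_norm_add _ _)
    rw [norm_mul]
    gcongr
  linarith

end ColumnFamily

section EuclideanColumns

variable {m n : Type*}

/-- The columns of a matrix as vectors of a Euclidean space, so that they carry the `ℓ²` norm. -/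
noncomputable def euclideanCol (A : Matrix m n ℝ) (j : n) : EuclideanSpace ℝ m :=
  WithLp.toLp 2 (A.col j)

/-- The submatrix `A_S` of the columns indexed by `S`. -/
abbrev colSubmatrix (A : Matrix m n ℝ) (S : Finset n) : Matrix m {i // i ∈ S} ℝ :=
  A.submatrix id (↑)

lemma sum_smul_euclideanCol [Fintype n] (A : Matrix m n ℝ) {T : Finset n} {v : n → ℝ}
    (hv : ∀ i ∉ T, v i = 0) :
    ∑ i ∈ T, v i • euclideanCol A i = WithLp.toLp 2 (A *ᵥ v) := by
  rw [sum_subset (subset_univ T) fun i _ hi => by rw [hv i hi, zero_smul]]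
  ext r
  simp [euclideanCol, mulVec, dotProduct, mul_comm]

lemma toLp_colSubmatrix_mulVec (A : Matrix m n ℝ) (S : Finset n) (v : n → ℝ) :
    WithLp.toLp 2 (colSubmatrix A S *ᵥ fun i => v i) = ∑ i ∈ S, v i • euclideanCol A i := by
  rw [← sum_coe_sort, ← sum_smul_euclideanCol (T := univ) _ (by simp)]
  rfl

variable [Fintype m]

lemma inner_euclideanCol (A : Matrix m n ℝ) (j : n) (w : m → ℝ) :
    inner ℝ (euclideanCol A j) (WithLp.toLp 2 w) = (Aᵀ *ᵥ w) j := by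
  rw [euclideanCol, EuclideanSpace.inner_toLp_toLp, star_trivial, dotProduct_comm]
  rfl

lemma isUnit_transpose_mul_self_of_linearIndependent_col [Fintype n] [DecidableEq n]
    {B : Matrix m n ℝ} (hB : LinearIndependent ℝ B.col) : IsUnit (Bᵀ * B) := by
  rw [← conjTranspose_eq_transpose_of_trivial]
  exact (PosDef.conjTranspose_mul_self B (mulVec_injective_iff.2 hB)).isUnit

lemma transpose_mulVec_sub_leastSquares [Fintype n] [DecidableEq n] {B : Matrix m n ℝ}
    (hB : IsUnit (Bᵀ * B)) (b : m → ℝ) :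
    Bᵀ *ᵥ (b - B *ᵥ (((Bᵀ * B)⁻¹ * Bᵀ) *ᵥ b)) = 0 := by
  rw [mulVec_sub, mulVec_mulVec, mulVec_mulVec, ← Matrix.mul_assoc,
    mul_nonsing_inv _ ((isUnit_iff_isUnit_det _).1 hB), Matrix.one_mul, sub_self]

lemma sum_leastSquares_eq_starProjection [DecidableEq n] {A : Matrix m n ℝ} {S : Finset n}
    (hS : LinearIndepOn ℝ (euclideanCol A) (S : Set n)) (b : m → ℝ) {x : n → ℝ}
    (hx : ∀ i : {i // i ∈ S}, x i =
      ((((colSubmatrix A S)ᵀ * colSubmatrix A S)⁻¹ * (colSubmatrix A S)ᵀ) *ᵥ b) i) :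
    ∑ i ∈ S, x i • euclideanCol A i =
      (columnSpan ℝ (euclideanCol A) S).starProjection (WithLp.toLp 2 b) := by
  have h_indep : LinearIndependent ℝ (colSubmatrix A S).col :=
    hS.map' (WithLp.linearEquiv 2 ℝ (m → ℝ)).toLinearMap (LinearEquiv.ker _)
  have h_normal := transpose_mulVec_sub_leastSquares
    (isUnit_transpose_mul_self_of_linearIndependent_col h_indep) b
  refine (Submodule.eq_starProjection_of_mem_orthogonal (mem_columnSpan.2 ⟨x, rfl⟩) ?_).symm
  refine (Submodule.mem_orthogonal _ _).2 fun z hz => ?_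
  induction hz using Submodule.span_induction with
  | mem z hz =>
    obtain ⟨i, hi, rfl⟩ := hz
    rw [← toLp_colSubmatrix_mulVec, funext hx, ← WithLp.toLp_sub, inner_euclideanCol]
    exact congrFun h_normal ⟨i, hi⟩
  | zero => exact inner_zero_left _
  | add y z _ _ hy hz => rw [inner_add_left, hy, hz, add_zero]
  | smul c z _ hz => rw [inner_smul_left, hz, mul_zero]

lemma restrictedIsometry_euclideanCol {N k : ℕ} {A : Matrix m (Fin N) ℝ} {δ : ℝ}
    (h : ∀ v : Fin N → ℝ, #(suppF v) ≤ k →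
      (1 - δ) * ∑ i, v i ^ 2 ≤ ∑ r, (A *ᵥ v) r ^ 2 ∧
        ∑ r, (A *ᵥ v) r ^ 2 ≤ (1 + δ) * ∑ i, v i ^ 2) :
    RestrictedIsometry ℝ (euclideanCol A) k δ := by
  intro T v hT
  let w := T.piecewise v 0
  have hw_on : ∀ i ∈ T, w i = v i := fun i hi => T.piecewise_eq_of_mem v 0 hi
  have hw_off : ∀ i ∉ T, w i = 0 := fun i hi => T.piecewise_eq_of_notMem v 0 hi
  have h_supp : suppF w ⊆ T := fun i hi => by
    by_contra hiT
    exact (mem_filter.1 hi).2 (hw_off i hiT)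
  have h_sum : ∑ i ∈ T, v i • euclideanCol A i = WithLp.toLp 2 (A *ᵥ w) := by
    rw [← sum_smul_euclideanCol A hw_off]
    exact sum_congr rfl fun i hi => by rw [hw_on i hi]
  have h_sq : ∑ i ∈ T, ‖v i‖ ^ 2 = ∑ i, w i ^ 2 := by
    rw [← sum_subset (subset_univ T) fun i _ hi => by rw [hw_off i hi, zero_pow two_ne_zero]]
    exact sum_congr rfl fun i hi => by rw [hw_on i hi, Real.norm_eq_abs, sq_abs]
  rw [h_sum, h_sq, EuclideanSpace.real_norm_sq_eq]
  exact h w ((card_le_card h_supp).trans hT)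

end EuclideanColumns

lemma pnorm_eq_sqrt_sum_norm_sq {N : ℕ} (T : Finset (Fin N)) (v : Fin N → ℝ) :
    pnorm T v = √(∑ i ∈ T, ‖v i‖ ^ 2) := by
  simp only [pnorm, Real.norm_eq_abs, sq_abs]

lemma mul_lt_of_dominance {δ γ t p X : ℝ} (hδ : δ < 1 / 2) (hp : 0 < p) (hX : γ * p ≤ X)
    (hγ : 2 * (1 + δ) / (1 - 2 * δ) * (t / p) < γ) :
    2 * (1 + δ) * t < (1 - 2 * δ) * X := by
  have hδ' : 0 < 1 - 2 * δ := by linarith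
  calc 2 * (1 + δ) * t
    _ = (1 - 2 * δ) * (2 * (1 + δ) / (1 - 2 * δ) * (t / p) * p) := by field_simp
    _ < (1 - 2 * δ) * (γ * p) := by gcongr
    _ ≤ (1 - 2 * δ) * X := by gcongr

/-- HTP step: if `l ∈ S* \ S`, `δ < 1/2`, and the dominance factor satisfies
`γ > (2(1+δ)/(1-2δ)) · r`, then `|u_l| > |u_j|` for every `j ∉ S ∪ S*`. -/
theorem stmt13 (m N s : ℕ) (A : Matrix (Fin m) (Fin N) ℝ) (δ γ : ℝ)
    (hδ0 : 0 ≤ δ) (hδ1 : δ < 1) (hγ : 0 < γ)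
    (hRIP : ∀ v : Fin N → ℝ, (suppF v).card ≤ s + 2 →
      (1 - δ) * (∑ i, v i ^ 2) ≤ (∑ r, (A.mulVec v r) ^ 2) ∧
      (∑ r, (A.mulVec v r) ^ 2) ≤ (1 + δ) * (∑ i, v i ^ 2))
    (xs : Fin N → ℝ) (hxs : (suppF xs).card ≤ s)
    (S : Finset (Fin N)) (hScard : S.card = s)
    (x : Fin N → ℝ)
    (hx0 : ∀ i, i ∉ S → x i = 0)
    (hxls : ∀ i : {i // i ∈ S}, x i.1 =
      ((((A.submatrix id ((↑) : {i // i ∈ S} → Fin N))ᵀ *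
          A.submatrix id ((↑) : {i // i ∈ S} → Fin N))⁻¹ *
        (A.submatrix id ((↑) : {i // i ∈ S} → Fin N))ᵀ).mulVec (A.mulVec xs)) i)
    (l : Fin N) (hl : ∀ i, |xs i| ≤ |xs l|)
    (hne : pnorm ((suppF xs).erase l) xs ≠ 0)
    (hdom : γ * pnorm ((suppF xs).erase l) xs ≤ |xs l|)
    (u : Fin N → ℝ)
    (hu : ∀ j, u j = x j + Aᵀ.mulVec (A.mulVec xs - A.mulVec x) j)
    (hlmem : l ∈ suppF xs \ S)
    (hδhalf : δ < 1 / 2)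
    (hγbig : γ > (2 * (1 + δ) / (1 - 2 * δ)) *
      (pnorm (suppF xs \ insert l S) xs / pnorm ((suppF xs).erase l) xs)) :
    ∀ j, j ∉ S ∪ suppF xs → |u j| < |u l| := by
  intro j hj
  obtain ⟨hlX, hlS⟩ := mem_sdiff.1 hlmem
  obtain ⟨hjS, hjX⟩ := notMem_union.1 hj
  have hA := restrictedIsometry_euclideanCol hRIP
  have hA_indep := hA.linearIndepOn hδ1 (hScard.trans_le (Nat.le_add_right s 2))
  have h_dom := mul_lt_of_dominance hδhalf (hne.symm.lt_of_le (Real.sqrt_nonneg _)) hdom hγbig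
  exact stmt13_general hA (by rw [hScard])
    ((card_le_card sdiff_subset).trans (hxs.trans (Nat.le_add_right s 2)))
    (sum_smul_euclideanCol A (by simp [suppF])) hx0
    (sum_leastSquares_eq_starProjection hA_indep _ hxls)
    (fun i => by rw [hu, sum_smul_euclideanCol A hx0, ← WithLp.toLp_sub, inner_euclideanCol])
    hlX hlS (by rwa [← pnorm_eq_sqrt_sum_norm_sq]) hjS (ne_of_mem_of_not_mem hlX hjX).symm
end

section
/- In the HTP-step setting, suppose additionally that l ∈ S ∩ S* and that the dominance factor satisfies γ > 2·√((1+δ)/(1−δ))·r', where r' = ‖x*_{S*\S}‖₂ / ‖x*_{S*\{l}}‖₂. Then |x_l| > |x_i| for every index i ∈ S \ S*. -/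
/-!
Write `u` for the part of `x*` outside `S` and `e` for the restriction of `x - x*` to `S`, so that
`x - x* = e - u`. The normal equations say that `A (x - x*)` is orthogonal to `A v` for all `v`
supported on `S`; hence `A e` is the orthogonal projection of `A u` and `‖A e‖ ≤ ‖A u‖`. The
restricted isometry property then gives `‖e‖ ≤ √((1+δ)/(1-δ)) ‖u‖`. For `i ∈ S \ S*` we have
`x_i = e_i`, while `x_l = x*_l + e_l`, so `|x_i| < |x_l|` as soon as `2 ‖e‖ < |x*_l|`, which is what
the dominance condition provides.
-/

open Matrix Finset

section

variable {m n : Type*} [Fintype n]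

lemma card_filter_ne_zero_le_card {R : Type*} [Zero R] [DecidableEq R] {S : Finset n} {v : n → R}
    (hv : ∀ i ∉ S, v i = 0) : #{i | v i ≠ 0} ≤ #S :=
  card_le_card fun i hi ↦ not_imp_comm.1 (hv i) (mem_filter.1 hi).2

lemma mulVec_eq_submatrix_mulVec {R : Type*} [NonUnitalNonAssocSemiring R] (A : Matrix m n R)
    {S : Finset n} {v : n → R} (hv : ∀ i ∉ S, v i = 0) :
    A *ᵥ v = A.submatrix id ((↑) : {i // i ∈ S} → n) *ᵥ fun i ↦ v i := by
  funext r
  calc ∑ j, A r j * v j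
      = ∑ j ∈ S, A r j * v j :=
        (sum_subset (subset_univ S) fun j _ hj ↦ by rw [hv j hj, mul_zero]).symm
    _ = ∑ j : {j // j ∈ S}, A r j * v j := (sum_coe_sort S fun j ↦ A r j * v j).symm

lemma submatrix_mulVec_injective {R : Type*} [Ring R] {A : Matrix m n R} {S : Finset n}
    (hA : ∀ v : n → R, (∀ i ∉ S, v i = 0) → A *ᵥ v = 0 → v = 0) :
    Function.Injective (A.submatrix id ((↑) : {i // i ∈ S} → n)).mulVec := by
  intro w w' hw
  let v : n → R := Function.extend (↑) (w - w') 0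
  have hv : ∀ i ∉ S, v i = 0 := fun i hi ↦
    Function.extend_apply' _ _ _ fun ⟨j, hj⟩ ↦ hi (hj ▸ j.2)
  have hvS : (fun i : {i // i ∈ S} ↦ v i) = w - w' :=
    funext (Subtype.val_injective.extend_apply _ _)
  have hAv : A *ᵥ v = 0 := by
    rw [mulVec_eq_submatrix_mulVec A hv, hvS, mulVec_sub, sub_eq_zero.2 hw]
  rw [← sub_eq_zero, ← hvS, hA v hv hAv]
  rfl

variable [Fintype m]

lemma sum_sq_le_sum_sq_of_dotProduct_sub_eq_zero {R : Type*} [CommRing R] [LinearOrder R]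
    [IsStrictOrderedRing R] {a b : m → R} (h : a ⬝ᵥ (a - b) = 0) :
    ∑ r, a r ^ 2 ≤ ∑ r, b r ^ 2 := by
  have pythagoras : ∑ r, b r ^ 2 = ∑ r, a r ^ 2 + ∑ r, (a r - b r) ^ 2 := by
    calc ∑ r, b r ^ 2
        = ∑ r, (a r ^ 2 + (a r - b r) ^ 2 - 2 * (a r * (a - b) r)) :=
          sum_congr rfl fun r _ ↦ by rw [Pi.sub_apply]; ring
      _ = ∑ r, a r ^ 2 + ∑ r, (a r - b r) ^ 2 - 2 * (a ⬝ᵥ (a - b)) := by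
          rw [sum_sub_distrib, sum_add_distrib, ← mul_sum, dotProduct]
      _ = ∑ r, a r ^ 2 + ∑ r, (a r - b r) ^ 2 := by rw [h, mul_zero, sub_zero]
  rw [pythagoras]
  exact le_add_of_nonneg_right (sum_nonneg fun r _ ↦ sq_nonneg _)

lemma isUnit_transpose_mul_self_of_mulVec_injective [DecidableEq n] {A : Matrix m n ℝ}
    (hA : Function.Injective A.mulVec) : IsUnit (Aᵀ * A) := by
  rw [← conjTranspose_eq_transpose_of_trivial]
  exact (PosDef.conjTranspose_mul_self A hA).isUnit

lemma transpose_mulVec_residual_eq_zero {R : Type*} [CommRing R] [DecidableEq n]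
    {A : Matrix m n R} (hA : IsUnit (Aᵀ * A)) (b : m → R) :
    Aᵀ *ᵥ (A *ᵥ (((Aᵀ * A)⁻¹ * Aᵀ) *ᵥ b) - b) = 0 := by
  rw [mulVec_sub, mulVec_mulVec, mulVec_mulVec, ← Matrix.mul_assoc,
    Matrix.mul_nonsing_inv _ ((isUnit_iff_isUnit_det _).1 hA), Matrix.one_mul, sub_self]

/-- `α` and `β` are lower and upper restricted isometry constants of order `k` for `A`: they bound
`‖A v‖² / ‖v‖²` over the nonzero `k`-sparse `v`. The restricted isometry property with constant `δ`
is the case `α = 1 - δ`, `β = 1 + δ`. -/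
def RestrictedIsometryBounds (A : Matrix m n ℝ) (k : ℕ) (α β : ℝ) : Prop :=
  ∀ v : n → ℝ, #{i | v i ≠ 0} ≤ k →
    α * ∑ i, v i ^ 2 ≤ ∑ r, (A *ᵥ v) r ^ 2 ∧ ∑ r, (A *ᵥ v) r ^ 2 ≤ β * ∑ i, v i ^ 2

lemma RestrictedIsometryBounds.eq_zero_of_mulVec_eq_zero {A : Matrix m n ℝ} {k : ℕ} {α β : ℝ}
    (hA : RestrictedIsometryBounds A k α β) (hα : 0 < α) {v : n → ℝ} (hv : #{i | v i ≠ 0} ≤ k)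
    (hAv : A *ᵥ v = 0) : v = 0 := by
  have hle : α * ∑ i, v i ^ 2 ≤ 0 := by simpa [hAv] using (hA v hv).1
  have hsum : ∑ i, v i ^ 2 = 0 :=
    le_antisymm (nonpos_of_mul_nonpos_right hle hα) (sum_nonneg fun i _ ↦ sq_nonneg _)
  funext i
  exact sq_eq_zero_iff.1 ((sum_eq_zero_iff_of_nonneg fun i _ ↦ sq_nonneg _).1 hsum i (mem_univ i))

/-- `x` is a least-squares solution of `A x = b` among the vectors supported on `S`. Minimality of
the residual is encoded by the normal equations, so that no columns of `A` need to be selected and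
no Gram matrix inverted. -/
structure IsLeastSquaresOn_s16 (A : Matrix m n ℝ) (b : m → ℝ) (S : Finset n) (x : n → ℝ) : Prop where
  eq_zero_of_notMem : ∀ i ∉ S, x i = 0
  normal_eq : ∀ i ∈ S, (Aᵀ *ᵥ (A *ᵥ x - b)) i = 0

lemma isLeastSquaresOn_of_eq_inv_mulVec [DecidableEq n] {A : Matrix m n ℝ} {b : m → ℝ}
    {S : Finset n} {x : n → ℝ}
    (hA : ∀ v : n → ℝ, (∀ i ∉ S, v i = 0) → A *ᵥ v = 0 → v = 0)
    (hx0 : ∀ i ∉ S, x i = 0)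
    (hx : ∀ i : {i // i ∈ S}, x i =
      ((((A.submatrix id ((↑) : {i // i ∈ S} → n))ᵀ *
          A.submatrix id ((↑) : {i // i ∈ S} → n))⁻¹ *
        (A.submatrix id ((↑) : {i // i ∈ S} → n))ᵀ) *ᵥ b) i) :
    IsLeastSquaresOn_s16 A b S x where
  eq_zero_of_notMem := hx0
  normal_eq i hi := by
    have hgram := isUnit_transpose_mul_self_of_mulVec_injective (submatrix_mulVec_injective hA)
    have hnormal := transpose_mulVec_residual_eq_zero hgram b
    rw [← funext hx, ← mulVec_eq_submatrix_mulVec A hx0] at hnormal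
    exact congrFun hnormal ⟨i, hi⟩

namespace IsLeastSquaresOn_s16

lemma mulVec_dotProduct_residual_eq_zero {A : Matrix m n ℝ} {b : m → ℝ} {S : Finset n}
    {x v : n → ℝ} (hx : IsLeastSquaresOn_s16 A b S x) (hv : ∀ i ∉ S, v i = 0) :
    A *ᵥ v ⬝ᵥ (A *ᵥ x - b) = 0 := by
  rw [← vecMul_transpose, ← dotProduct_mulVec]
  refine sum_eq_zero fun i _ ↦ ?_
  by_cases hi : i ∈ S
  · rw [hx.normal_eq i hi, mul_zero]
  · rw [hv i hi, zero_mul]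

variable [DecidableEq n] {A : Matrix m n ℝ} {S T : Finset n} {xs x : n → ℝ}

lemma sum_sq_mulVec_error_le (hx : IsLeastSquaresOn_s16 A (A *ᵥ xs) S x) (hxs : ∀ i ∉ T, xs i = 0) :
    ∑ r, (A *ᵥ (S : Set n).indicator (x - xs)) r ^ 2 ≤
      ∑ r, (A *ᵥ ((T \ S : Finset n) : Set n).indicator xs) r ^ 2 := by
  have hsplit : (S : Set n).indicator (x - xs) - ((T \ S : Finset n) : Set n).indicator xs =
      x - xs := by
    funext i
    by_cases hi : i ∈ S
    · simp [hi]
    · by_cases hiT : i ∈ T <;> simp [hi, hiT, hx.eq_zero_of_notMem, hxs]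
  apply sum_sq_le_sum_sq_of_dotProduct_sub_eq_zero
  rw [← mulVec_sub, hsplit, mulVec_sub]
  exact hx.mulVec_dotProduct_residual_eq_zero fun i hi ↦ Set.indicator_of_notMem hi _

variable {k : ℕ} {α β : ℝ}

lemma sum_sq_sub_le (hx : IsLeastSquaresOn_s16 A (A *ᵥ xs) S x) (hα : 0 < α)
    (hA : RestrictedIsometryBounds A k α β) (hS : #S ≤ k) (hTS : #(T \ S) ≤ k)
    (hxs : ∀ i ∉ T, xs i = 0) :
    ∑ i ∈ S, (x i - xs i) ^ 2 ≤ β / α * ∑ i ∈ T \ S, xs i ^ 2 := by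
  have sum_sq_indicator (U : Finset n) (v : n → ℝ) :
      ∑ i, (U : Set n).indicator v i ^ 2 = ∑ i ∈ U, v i ^ 2 :=
    sum_indicator_subset_of_eq_zero v (fun _ t ↦ t ^ 2) (subset_univ U) fun _ ↦
      zero_pow two_ne_zero
  have indicator_sparse {U : Finset n} (v : n → ℝ) (hU : #U ≤ k) :
      #{i | (U : Set n).indicator v i ≠ 0} ≤ k :=
    (card_filter_ne_zero_le_card fun i hi ↦ Set.indicator_of_notMem hi v).trans hU
  rw [div_mul_eq_mul_div, le_div_iff₀' hα]
  calc α * ∑ i ∈ S, (x i - xs i) ^ 2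
      = α * ∑ i, (S : Set n).indicator (x - xs) i ^ 2 := by rw [sum_sq_indicator]; rfl
    _ ≤ ∑ r, (A *ᵥ (S : Set n).indicator (x - xs)) r ^ 2 := (hA _ (indicator_sparse _ hS)).1
    _ ≤ ∑ r, (A *ᵥ ((T \ S : Finset n) : Set n).indicator xs) r ^ 2 :=
        hx.sum_sq_mulVec_error_le hxs
    _ ≤ β * ∑ i, ((T \ S : Finset n) : Set n).indicator xs i ^ 2 :=
        (hA _ (indicator_sparse _ hTS)).2
    _ = β * ∑ i ∈ T \ S, xs i ^ 2 := by rw [sum_sq_indicator]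

lemma abs_sub_le (hx : IsLeastSquaresOn_s16 A (A *ᵥ xs) S x) (hα : 0 < α)
    (hA : RestrictedIsometryBounds A k α β) (hS : #S ≤ k) (hTS : #(T \ S) ≤ k)
    (hxs : ∀ i ∉ T, xs i = 0) {i : n} (hi : i ∈ S) :
    |x i - xs i| ≤ √(β / α) * √(∑ j ∈ T \ S, xs j ^ 2) := by
  rw [← Real.sqrt_mul' _ (sum_nonneg fun j _ ↦ sq_nonneg (xs j))]
  refine Real.abs_le_sqrt (le_trans ?_ (hx.sum_sq_sub_le hα hA hS hTS hxs))
  exact single_le_sum (f := fun j ↦ (x j - xs j) ^ 2) (fun j _ ↦ sq_nonneg _) hi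

end IsLeastSquaresOn_s16

lemma mul_lt_of_mul_div_lt_of_mul_le {K : Type*} [Field K] [LinearOrder K] [IsStrictOrderedRing K]
    {c p q y γ : K} (hq : 0 < q) (hc : c * (p / q) < γ) (hy : γ * q ≤ y) : c * p < y := by
  calc c * p = c * (p / q) * q := by rw [mul_assoc, div_mul_cancel₀ _ hq.ne']
    _ < γ * q := mul_lt_mul_of_pos_right hc hq
    _ ≤ y := hy

theorem stmt16_general [DecidableEq n] {A : Matrix m n ℝ} {k : ℕ} {α β : ℝ} (hα : 0 < α)
    (hA : RestrictedIsometryBounds A k α β) {S T : Finset n} (hS : #S ≤ k) (hTS : #(T \ S) ≤ k)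
    {xs x : n → ℝ} (hxs : ∀ i ∉ T, xs i = 0) (hx0 : ∀ i ∉ S, x i = 0)
    (hxls : ∀ i : {i // i ∈ S}, x i =
      ((((A.submatrix id ((↑) : {i // i ∈ S} → n))ᵀ *
          A.submatrix id ((↑) : {i // i ∈ S} → n))⁻¹ *
        (A.submatrix id ((↑) : {i // i ∈ S} → n))ᵀ) *ᵥ (A *ᵥ xs)) i)
    {l : n} (hl : l ∈ S) (hdom : 2 * √(β / α) * √(∑ j ∈ T \ S, xs j ^ 2) < |xs l|) :
    ∀ i ∈ S \ T, |x i| < |x l| := by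
  intro i hi
  obtain ⟨hiS, hiT⟩ := mem_sdiff.1 hi
  have hx : IsLeastSquaresOn_s16 A (A *ᵥ xs) S x := isLeastSquaresOn_of_eq_inv_mulVec
    (fun v hv ↦ hA.eq_zero_of_mulVec_eq_zero hα ((card_filter_ne_zero_le_card hv).trans hS))
    hx0 hxls
  have herror_i : |x i| ≤ √(β / α) * √(∑ j ∈ T \ S, xs j ^ 2) := by
    simpa only [hxs i hiT, sub_zero] using hx.abs_sub_le hα hA hS hTS hxs hiS
  have herror_l : |xs l - x l| ≤ √(β / α) * √(∑ j ∈ T \ S, xs j ^ 2) :=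
    abs_sub_comm (x l) (xs l) ▸ hx.abs_sub_le hα hA hS hTS hxs hl
  have htriangle := abs_sub_abs_le_abs_sub (xs l) (x l)
  linarith

end

/-- HTP step: if `l ∈ S ∩ S*` and the dominance factor satisfies
`γ > 2·√((1+δ)/(1-δ))·r'`, then `|x_l| > |x_i|` for every `i ∈ S \ S*`. -/
theorem stmt16 (m N s : ℕ) (A : Matrix (Fin m) (Fin N) ℝ) (δ γ : ℝ)
    (hδ0 : 0 ≤ δ) (hδ1 : δ < 1) (hγ : 0 < γ)
    (hRIP : ∀ v : Fin N → ℝ, (suppF v).card ≤ s + 2 →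
      (1 - δ) * (∑ i, v i ^ 2) ≤ (∑ r, (A.mulVec v r) ^ 2) ∧
      (∑ r, (A.mulVec v r) ^ 2) ≤ (1 + δ) * (∑ i, v i ^ 2))
    (xs : Fin N → ℝ) (hxs : (suppF xs).card ≤ s)
    (S : Finset (Fin N)) (hScard : S.card = s)
    (x : Fin N → ℝ)
    (hx0 : ∀ i, i ∉ S → x i = 0)
    (hxls : ∀ i : {i // i ∈ S}, x i.1 =
      ((((A.submatrix id ((↑) : {i // i ∈ S} → Fin N))ᵀ *
          A.submatrix id ((↑) : {i // i ∈ S} → Fin N))⁻¹ *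
        (A.submatrix id ((↑) : {i // i ∈ S} → Fin N))ᵀ).mulVec (A.mulVec xs)) i)
    (l : Fin N) (hl : ∀ i, |xs i| ≤ |xs l|)
    (hne : pnorm ((suppF xs).erase l) xs ≠ 0)
    (hdom : γ * pnorm ((suppF xs).erase l) xs ≤ |xs l|)
    (hlmem : l ∈ S ∩ suppF xs)
    (hγbig : γ > 2 * Real.sqrt ((1 + δ) / (1 - δ)) *
      (pnorm (suppF xs \ S) xs / pnorm ((suppF xs).erase l) xs)) :
    ∀ i ∈ S \ suppF xs, |x i| < |x l| :=
  stmt16_general (T := suppF xs) (sub_pos.2 hδ1) hRIP (by omega)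
    ((card_le_card sdiff_subset).trans (by omega)) (fun i ↦ by simp [suppF]) hx0 hxls
    (mem_inter.1 hlmem).1
    (mul_lt_of_mul_div_lt_of_mul_le ((Real.sqrt_nonneg _).lt_of_ne' hne) hγbig hdom)
end

section
/- In the OMP-step setting, for every index j ≠ l, the j-th entry of u = Aᵀ A x* satisfies |u_j| ≤ (δ + (1/γ)·√(δ² + (1+δ)²)) · |x*_l|. -/
/-!
Polarization turns the restricted isometry property into a statement about inner products: `AᵀA` is
close to the identity on sparse vectors. Testing this against the basis vector `e_j`, which together
with `x` has at most `s + 1` nonzero coordinates, gives `|u_j - x_j| ≤ δ ‖x‖`. Let `z` be `x` with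
its `l`-th entry removed. For `j ≠ l` we have `|x_j| ≤ ‖z‖` and `‖x‖ ≤ |x_l| + ‖z‖`, so
`|u_j| ≤ δ |x_l| + (1 + δ) ‖z‖`. Finally `‖z‖ ≤ |x_l| / γ` by dominance, and
`1 + δ ≤ √(δ² + (1 + δ)²)`.
-/

open Matrix Finset

section

open scoped InnerProductSpace

open Function (support)

theorem norm_smul_add_smul_sq_real {E : Type*} [SeminormedAddCommGroup E] [InnerProductSpace ℝ E]
    (x y : E) (a b : ℝ) :
    ‖a • x + b • y‖ ^ 2 = a ^ 2 * ‖x‖ ^ 2 + 2 * (a * b) * ⟪x, y⟫_ℝ + b ^ 2 * ‖y‖ ^ 2 := by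
  rw [norm_add_sq_real, norm_smul, norm_smul, mul_pow, mul_pow, Real.norm_eq_abs,
    Real.norm_eq_abs, sq_abs, sq_abs, real_inner_smul_left, real_inner_smul_right]
  ring

theorem abs_inner_map_sub_inner_le_of_abs_norm_sq_sub_le {E F : Type*} [NormedAddCommGroup E]
    [InnerProductSpace ℝ E] [SeminormedAddCommGroup F] [InnerProductSpace ℝ F] {A : E →ₗ[ℝ] F}
    {δ : ℝ} {x y : E}
    (h : ∀ a b : ℝ,
      |‖A (a • x + b • y)‖ ^ 2 - ‖a • x + b • y‖ ^ 2| ≤ δ * ‖a • x + b • y‖ ^ 2) :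
    |⟪A x, A y⟫_ℝ - ⟪x, y⟫_ℝ| ≤ δ * (‖x‖ * ‖y‖) := by
  obtain hp | hp := (mul_nonneg (norm_nonneg x) (norm_nonneg y)).eq_or_lt
  · obtain rfl | rfl : x = 0 ∨ y = 0 := by simpa using hp.symm
    all_goals simp
  -- Rescaling to equal norms makes the polarized bound `δ (‖x‖² + ‖y‖²) / 2` a product of norms.
  let v := ‖y‖ • x + ‖x‖ • y
  let w := ‖y‖ • x + (-‖x‖) • y
  have hpolar : 4 * (‖x‖ * ‖y‖) * (⟪A x, A y⟫_ℝ - ⟪x, y⟫_ℝ) =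
      (‖A v‖ ^ 2 - ‖v‖ ^ 2) - (‖A w‖ ^ 2 - ‖w‖ ^ 2) := by
    simp only [v, w, map_add, map_smul, norm_smul_add_smul_sq_real]
    ring
  have hparallelogram : ‖v‖ ^ 2 + ‖w‖ ^ 2 = 4 * (‖x‖ * ‖y‖) ^ 2 := by
    simp only [v, w, norm_smul_add_smul_sq_real]
    ring
  have hp4 : 0 < 4 * (‖x‖ * ‖y‖) := by positivity
  refine le_of_mul_le_mul_left ?_ hp4
  calc
    _ = |(‖A v‖ ^ 2 - ‖v‖ ^ 2) - (‖A w‖ ^ 2 - ‖w‖ ^ 2)| := by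
      rw [← hpolar, abs_mul, abs_of_pos hp4]
    _ ≤ |‖A v‖ ^ 2 - ‖v‖ ^ 2| + |‖A w‖ ^ 2 - ‖w‖ ^ 2| := abs_sub _ _
    _ ≤ δ * ‖v‖ ^ 2 + δ * ‖w‖ ^ 2 := add_le_add (h _ _) (h _ _)
    _ = _ := by
      rw [← mul_add, hparallelogram]
      ring

/-- The restricted isometry property of order `k` with constant `δ`: on vectors with at most `k`
nonzero coordinates, `A` distorts the squared norm by a factor between `1 - δ` and `1 + δ`. -/
def RestrictedIsometryProperty {ι F : Type*} [Fintype ι] [SeminormedAddCommGroup F]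
    [InnerProductSpace ℝ F] (A : EuclideanSpace ℝ ι →ₗ[ℝ] F) (k : ℕ) (δ : ℝ) : Prop :=
  ∀ v : EuclideanSpace ℝ ι, (support v).ncard ≤ k →
    (1 - δ) * ‖v‖ ^ 2 ≤ ‖A v‖ ^ 2 ∧ ‖A v‖ ^ 2 ≤ (1 + δ) * ‖v‖ ^ 2

namespace RestrictedIsometryProperty

variable {ι F : Type*} [Fintype ι] [SeminormedAddCommGroup F] [InnerProductSpace ℝ F]
  {A : EuclideanSpace ℝ ι →ₗ[ℝ] F} {k s : ℕ} {δ : ℝ}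

theorem abs_inner_map_sub_inner_le (hA : RestrictedIsometryProperty A k δ)
    {x y : EuclideanSpace ℝ ι} (hxy : (support x ∪ support y).ncard ≤ k) :
    |⟪A x, A y⟫_ℝ - ⟪x, y⟫_ℝ| ≤ δ * (‖x‖ * ‖y‖) := by
  refine abs_inner_map_sub_inner_le_of_abs_norm_sq_sub_le fun a b => ?_
  have hsupp : support (a • x + b • y) ⊆ support x ∪ support y :=
    (Function.support_add _ _).trans <|
      Set.union_subset_union (Function.support_const_smul_subset a x)
        (Function.support_const_smul_subset b y)
  have hsq := hA (a • x + b • y) ((Set.ncard_le_ncard hsupp).trans hxy)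
  rw [abs_le]
  constructor <;> linarith

variable [DecidableEq ι]

theorem abs_inner_map_single_sub_apply_le (hA : RestrictedIsometryProperty A (s + 1) δ)
    {x : EuclideanSpace ℝ ι} (hx : (support x).ncard ≤ s) (j : ι) :
    |⟪A (EuclideanSpace.single j 1), A x⟫_ℝ - x j| ≤ δ * ‖x‖ := by
  have hcard : (support (EuclideanSpace.single j (1 : ℝ)) ∪ support x).ncard ≤ s + 1 :=
    calc
      _ ≤ (insert j (support x)).ncard :=
        Set.ncard_le_ncard (Set.union_subset_union_left _ Pi.support_single_subset)
      _ ≤ s + 1 := (Set.ncard_insert_le _ _).trans (by gcongr)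
  simpa [EuclideanSpace.inner_single_left] using hA.abs_inner_map_sub_inner_le hcard

theorem abs_inner_map_single_le (hA : RestrictedIsometryProperty A (s + 1) δ) (hδ : 0 ≤ δ)
    {x : EuclideanSpace ℝ ι} (hx : (support x).ncard ≤ s) {j l : ι} (hjl : j ≠ l) :
    |⟪A (EuclideanSpace.single j 1), A x⟫_ℝ| ≤
      δ * |x l| + (1 + δ) * ‖x - EuclideanSpace.single l (x l)‖ := by
  have hj : |x j| ≤ ‖x - EuclideanSpace.single l (x l)‖ := by
    simpa [hjl] using PiLp.norm_apply_le (x - EuclideanSpace.single l (x l)) j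
  have hnorm : ‖x‖ ≤ |x l| + ‖x - EuclideanSpace.single l (x l)‖ := by
    simpa using norm_le_norm_add_norm_sub' x (EuclideanSpace.single l (x l))
  calc
    _ ≤ |⟪A (EuclideanSpace.single j 1), A x⟫_ℝ - x j| + |x j| := by
      simpa using abs_add_le (⟪A (EuclideanSpace.single j 1), A x⟫_ℝ - x j) (x j)
    _ ≤ δ * (|x l| + ‖x - EuclideanSpace.single l (x l)‖) +
        ‖x - EuclideanSpace.single l (x l)‖ := by
      gcongr
      exact (hA.abs_inner_map_single_sub_apply_le hx j).trans (by gcongr)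
    _ = _ := by ring

end RestrictedIsometryProperty

theorem stmt18_general {ι F : Type*} [Fintype ι] [DecidableEq ι] [SeminormedAddCommGroup F]
    [InnerProductSpace ℝ F] {A : EuclideanSpace ℝ ι →ₗ[ℝ] F} {s : ℕ} {δ γ : ℝ}
    (hA : RestrictedIsometryProperty A (s + 1) δ) (hδ : 0 ≤ δ) (hγ : 0 < γ)
    {x : EuclideanSpace ℝ ι} (hx : (support x).ncard ≤ s) {l : ι}
    (hdom : γ * ‖x - EuclideanSpace.single l (x l)‖ ≤ |x l|) {j : ι} (hjl : j ≠ l) :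
    |⟪A (EuclideanSpace.single j 1), A x⟫_ℝ| ≤ (δ + 1 / γ * (1 + δ)) * |x l| :=
  calc
    _ ≤ δ * |x l| + (1 + δ) * ‖x - EuclideanSpace.single l (x l)‖ :=
      hA.abs_inner_map_single_le hδ hx hjl
    _ ≤ δ * |x l| + (1 + δ) * (|x l| / γ) := by
      gcongr
      rwa [le_div_iff₀' hγ]
    _ = _ := by ring

theorem card_suppF {N : ℕ} (x : Fin N → ℝ) : (suppF x).card = (support x).ncard := by
  rw [← Set.ncard_coe_finset]
  congr 1
  ext i
  simp [suppF]

theorem pnorm_erase_suppF {N : ℕ} (x : Fin N → ℝ) (l : Fin N) :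
    pnorm ((suppF x).erase l) x = ‖WithLp.toLp 2 x - EuclideanSpace.single l (x l)‖ := by
  rw [EuclideanSpace.norm_eq, pnorm, ← sum_subset (subset_univ ((suppF x).erase l))]
  · congr 1
    refine sum_congr rfl fun i hi => ?_
    simp [ne_of_mem_erase hi]
  · intro i _ hi
    obtain rfl | hil := eq_or_ne i l
    · simp
    · have hxi : x i = 0 := by simpa [suppF, hil] using hi
      simp [hil, hxi]

theorem restrictedIsometryProperty_toEuclideanLin_iff {m : Type*} [Fintype m] {N k : ℕ}
    {A : Matrix m (Fin N) ℝ} {δ : ℝ} :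
    RestrictedIsometryProperty A.toEuclideanLin k δ ↔
      ∀ v : Fin N → ℝ, (suppF v).card ≤ k →
        (1 - δ) * ∑ i, v i ^ 2 ≤ ∑ r, (A *ᵥ v) r ^ 2 ∧
          ∑ r, (A *ᵥ v) r ^ 2 ≤ (1 + δ) * ∑ i, v i ^ 2 := by
  rw [RestrictedIsometryProperty, (WithLp.equiv 2 (Fin N → ℝ)).forall_congr_left]
  simp [EuclideanSpace.real_norm_sq_eq, card_suppF]

theorem inner_toEuclideanLin_single_left {m n : Type*} [Fintype m] [Fintype n] [DecidableEq n]
    (A : Matrix m n ℝ) (j : n) (w : m → ℝ) :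
    ⟪A.toEuclideanLin (EuclideanSpace.single j 1), WithLp.toLp 2 w⟫_ℝ = (Aᵀ *ᵥ w) j := by
  simp [PiLp.inner_apply, mulVec, dotProduct, mul_comm, Pi.single_apply]

end

/-- OMP step, upper bound on `|u_j|` for `j ≠ l`, where `u = Aᵀ A x*`. -/
theorem stmt18 (m N s : ℕ) (hs : 1 ≤ s) (A : Matrix (Fin m) (Fin N) ℝ) (δ γ : ℝ)
    (hδ0 : 0 ≤ δ) (hδ1 : δ < 1) (hγ : 0 < γ)
    (hRIP : ∀ v : Fin N → ℝ, (suppF v).card ≤ s + 1 →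
      (1 - δ) * (∑ i, v i ^ 2) ≤ (∑ r, (A.mulVec v r) ^ 2) ∧
      (∑ r, (A.mulVec v r) ^ 2) ≤ (1 + δ) * (∑ i, v i ^ 2))
    (xs : Fin N → ℝ) (hxs : (suppF xs).card ≤ s) (hxsne : xs ≠ 0)
    (u : Fin N → ℝ) (hu : ∀ j, u j = Aᵀ.mulVec (A.mulVec xs) j)
    (l : Fin N) (hl : ∀ i, |xs i| ≤ |xs l|)
    (hdom : γ * pnorm ((suppF xs).erase l) xs ≤ |xs l|) :
    ∀ j, j ≠ l →
      |u j| ≤ (δ + (1 / γ) * Real.sqrt (δ ^ 2 + (1 + δ) ^ 2)) * |xs l| := by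
  intro j hj
  rw [card_suppF] at hxs
  rw [pnorm_erase_suppF] at hdom
  rw [hu, ← inner_toEuclideanLin_single_left]
  have hA := restrictedIsometryProperty_toEuclideanLin_iff.2 hRIP
  refine (stmt18_general hA hδ0 hγ hxs hdom hj).trans ?_
  gcongr
  exact Real.le_sqrt_of_sq_le (le_add_of_nonneg_left (sq_nonneg δ))
end
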